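/- arXiv:1708.09216 — 4 statements merged into one kernel-verified Lean document; each statement's English description precedes it below -/
import Mathlib

section
/- Let Λ = {q prime : q − 1 is squarefree}, and let L ⊆ algebraic closure of ℚ be the compositum of the cyclotomic fields ℚ(ζ_q) for all q ∈ Λ, where ζ_q is a primitive q-th root of unity. Then L/ℚ is a Galois extension whose Galois group, with its Krull topology, is isomorphic as a topological group to the direct product ∏_{q∈Λ} ℤ/(q−1)ℤ with the product topology, and for every rational prime p there is no ring homomorphism from L into any finite field extension of the p-adic field ℚ_p (L has unbounded local degrees at every rational prime). -/
/-!
Write `Λ` for `mirskySet` and `L` for `mirskyCyclotomicField`.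

**Infinitude of `Λ`** (`mirskySet_infinite`, Mirsky). Weigh a prime `q` by `log q / q ^ x` and let
`x → 1⁺`, so that a set of primes of Dirichlet density `δ` has total weight `δ / (x - 1) + O(1)`.
If `q - 1` is not squarefree then `q ≡ 1 mod p ^ 2` for some prime `p`. For each fixed `p` these `q`
have density `1 / (p (p - 1))`, and `∑ 1 / (p (p - 1)) ≤ 11 / 12` over any finite set of primes,
since `∑_{n ≥ 2} 1 / (n (n - 1)) = 1` telescopes and the term `n = 4` is missing. Outside a large
finite set of `p` the density is controlled by a uniform Chebyshev bound
`∑_{q ≤ X, q ≡ 1 mod p ^ 2} log q ≤ 6 X log p / p ^ 2` (`sum_log_primes_le`), which is summable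
over `p`. It comes from comparing `∏_{k ≤ N} (p ^ 2 k + 1)` with `N!`: the product is divisible by
the prime-to-`p` part of `N!` and by each prime `q ≡ 1 mod p ^ 2` in `(N, p ^ 2 N + 1]`. So the
primes with `q - 1` not squarefree have upper density less than `1`.

**Galois group** (`exists_gal_mulEquiv`). `L` is the cyclotomic extension attached to `Λ`, hence
Galois. The action on the chosen `ζ_q` gives a continuous injective homomorphism into
`∏ (ZMod q)ˣ ≃ ∏ ZMod (q - 1)`. Its image is closed by compactness, and dense because cyclotomic
polynomials are irreducible over `ℚ`. A continuous bijection from a compact space to a Hausdorff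
space is a homeomorphism.

**Local degrees** (`not_hasBoundedLocalDegreesAt`). Inside an algebraic closure of `ℚ_p`, a root of
unity `ξ ≠ 1` of order prime to `p` satisfies `‖ξ - 1‖ ≥ 1`. If `L` embedded in a finite extension
of `ℚ_p`, the `ζ_q` with `q ∈ Λ`, `q ≠ p`, would form an infinite `1`-separated subset of the unit
ball of a finite-dimensional space over `ℚ_p`, contradicting compactness of that ball.
-/

/-- `L` can be embedded in some finite extension of `ℚ_p` (bounded local degrees at `p`). -/
def HasBoundedLocalDegreesAt (p : ℕ) (hp : p.Prime) (L : Type*) [Field L] : Prop :=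
  letI : Fact p.Prime := ⟨hp⟩
  ∃ (E : Type) (_ : Field E) (_ : Algebra ℚ_[p] E),
    FiniteDimensional ℚ_[p] E ∧ Nonempty (L →+* E)

/-- The set of primes `q` such that `q - 1` is squarefree. -/
def mirskySet : Set ℕ := {q : ℕ | q.Prime ∧ Squarefree (q - 1)}

/-- The compositum of the cyclotomic fields `ℚ(ζ_q)` for all primes `q` with `q - 1`
squarefree, inside a fixed algebraic closure of `ℚ`. -/
noncomputable def mirskyCyclotomicField : IntermediateField ℚ (AlgebraicClosure ℚ) :=
  IntermediateField.adjoin ℚ {x : AlgebraicClosure ℚ | ∃ q ∈ mirskySet, x ^ q = 1}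

/-! ### A Chebyshev bound for primes congruent to one modulo a prime square -/

/-- Modulo `u` the product is, up to a unit, a rising factorial of length `N`, which `N!` divides. -/
theorem coprime_part_dvd_prod {m u N : ℕ} (hu : u ∣ N.factorial) (hmu : Nat.Coprime m u) :
    u ∣ ∏ k ∈ Finset.range N, (m * (k + 1) + 1) := by
  rcases Nat.eq_zero_or_pos u with rfl | hu0
  · exact absurd (zero_dvd_iff.mp hu) N.factorial_ne_zero
  have : NeZero u := ⟨hu0.ne'⟩
  obtain ⟨r, hr⟩ : ∃ r : ℕ, ((m * r : ℕ) : ZMod u) = 1 :=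
    ⟨((m : ZMod u)⁻¹).val, by
      rw [Nat.cast_mul, ZMod.natCast_zmod_val, ZMod.coe_mul_inv_eq_one _ hmu]⟩
  have hrm : (r : ZMod u) * m = 1 := by rw [mul_comm]; exact_mod_cast hr
  have h1 : ((((r + 1).ascFactorial N : ℕ)) : ZMod u) = 0 :=
    (ZMod.natCast_eq_zero_iff _ _).2 (hu.trans (Nat.factorial_dvd_ascFactorial _ _))
  rw [← ZMod.natCast_eq_zero_iff]
  have h2 : ((∏ k ∈ Finset.range N, (m * (k + 1) + 1) : ℕ) : ZMod u) =
      (m : ZMod u) ^ N * (((r + 1).ascFactorial N : ℕ) : ZMod u) := by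
    rw [Nat.ascFactorial_eq_prod_range, Nat.cast_prod, Nat.cast_prod, Finset.pow_eq_prod_const,
      ← Finset.prod_mul_distrib]
    refine Finset.prod_congr rfl fun k _ => ?_
    push_cast
    linear_combination -hrm
  rw [h2, h1, mul_zero]

/-- A Chebyshev bound for primes `≡ 1 mod p ^ 2`, uniform in `p`. Primes up to `N = X / p ^ 2` are
handled by the primorial, larger ones by `coprime_part_dvd_prod`. -/
theorem prod_primes_le {p : ℕ} (hp : p.Prime) (X : ℕ) :
    ∏ n ∈ Finset.range (X + 1) with (n.Prime ∧ p ^ 2 ∣ n - 1), n ≤ p ^ (6 * (X / p ^ 2)) := by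
  set N := X / p ^ 2 with hN
  set D := Finset.filter (fun n => n.Prime ∧ p ^ 2 ∣ n - 1) (Finset.range (X + 1)) with hD
  have hp2 := hp.two_le
  rw [← Finset.prod_filter_mul_prod_filter_not D (fun n => n ≤ N)]
  have h1 : ∏ n ∈ D with n ≤ N, n ≤ p ^ (2 * N) := by
    calc ∏ n ∈ D with n ≤ N, n ≤ primorial N := by
          unfold primorial
          refine Finset.prod_le_prod_of_subset_of_one_le' ?_ ?_
          · intro n hn
            simp only [hD, Finset.mem_filter, Finset.mem_range] at hn ⊢
            exact ⟨by omega, hn.1.2.1⟩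
          · intro n hn _
            exact (Finset.mem_filter.1 hn).2.one_lt.le
      _ ≤ 4 ^ N := primorial_le_four_pow N
      _ ≤ (p ^ 2) ^ N := Nat.pow_le_pow_left (by nlinarith) N
      _ = p ^ (2 * N) := by rw [pow_mul]
  obtain ⟨v, u, hpu, hvu⟩ := Nat.exists_eq_pow_mul_and_not_dvd N.factorial_ne_zero p hp.ne_one
  have hu : u ∣ N.factorial := ⟨p ^ v, by rw [hvu, mul_comm]⟩
  have hu0 : 0 < u := Nat.pos_of_dvd_of_pos hu N.factorial_pos
  have hv : v ≤ N := by
    have : Fact p.Prime := ⟨hp⟩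
    have h := sub_one_mul_padicValNat_factorial (p := p) N
    have h' : v ≤ padicValNat p N.factorial :=
      (padicValNat_dvd_iff_le N.factorial_ne_zero).1 ⟨u, hvu⟩
    have : padicValNat p N.factorial ≤ (p - 1) * padicValNat p N.factorial :=
      Nat.le_mul_of_pos_left _ (by omega)
    exact h'.trans (this.trans (h.le.trans (Nat.sub_le _ _)))
  have hA := coprime_part_dvd_prod (m := p ^ 2) hu
    (Nat.Coprime.pow_left 2 ((Nat.Prime.coprime_iff_not_dvd hp).2 hpu))
  set A := ∏ k ∈ Finset.range N, (p ^ 2 * (k + 1) + 1) with hAdef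
  have hDA : ∏ n ∈ D with ¬ n ≤ N, n ∣ A := by
    refine Finset.prod_primes_dvd _ (fun n hn => ?_) (fun n hn => ?_)
    · exact (Finset.mem_filter.1 (Finset.mem_filter.1 hn).1).2.1.prime
    · simp only [hD, Finset.mem_filter, Finset.mem_range] at hn
      obtain ⟨⟨hnX, hnp, k, hk⟩, hnN⟩ := hn
      have hn2 := hnp.two_le
      have hk0 : k ≠ 0 := by rintro rfl; omega
      have hkN : k ≤ N := by
        rw [hN, Nat.le_div_iff_mul_le (by positivity), mul_comm]; omega
      have := Finset.dvd_prod_of_mem (fun k => p ^ 2 * (k + 1) + 1)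
        (Finset.mem_range.2 (show k - 1 < N by omega))
      rwa [Nat.sub_add_cancel (by omega), ← hk, Nat.sub_add_cancel (by omega)] at this
  have hcop : Nat.Coprime (∏ n ∈ D with ¬ n ≤ N, n) u := by
    refine Nat.Coprime.prod_left fun n hn => ?_
    simp only [hD, Finset.mem_filter] at hn
    rw [Nat.Prime.coprime_iff_not_dvd hn.1.2.1]
    exact fun h => hn.2 ((hn.1.2.1.dvd_factorial).1 (h.trans hu))
  have hA0 : 0 < A := Finset.prod_pos fun k _ => by positivity
  have hAle : A ≤ (p ^ 3) ^ N * N.factorial := by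
    rw [← Finset.prod_range_add_one_eq_factorial, Finset.pow_eq_prod_const,
      ← Finset.prod_mul_distrib]
    refine Finset.prod_le_prod' fun k _ => ?_
    have : p ^ 2 + 1 ≤ p ^ 3 := by nlinarith [sq_nonneg p]
    nlinarith
  -- The large primes times `u` divide `A ≤ p ^ (3 * N) * p ^ v * u`, and `u` cancels.
  have h2 : ∏ n ∈ D with ¬ n ≤ N, n ≤ p ^ (4 * N) := by
    have h3 := (Nat.le_of_dvd hA0 (hcop.mul_dvd_of_dvd_of_dvd hDA hA)).trans hAle
    rw [hvu, ← mul_assoc] at h3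
    refine (Nat.le_of_mul_le_mul_right h3 hu0).trans ?_
    rw [← pow_mul, ← pow_add]
    exact Nat.pow_le_pow_right hp.pos (by omega)
  calc _ ≤ p ^ (2 * N) * p ^ (4 * N) := Nat.mul_le_mul h1 h2
    _ = _ := by rw [← pow_add]; congr 1; ring

theorem sum_log_primes_le {p : ℕ} (hp : p.Prime) (X : ℕ) :
    ∑ n ∈ Finset.range (X + 1) with (n.Prime ∧ p ^ 2 ∣ n - 1), Real.log n ≤
      6 * (Real.log p / p ^ 2) * X := by
  rw [← Real.log_prod fun n hn => by
    exact_mod_cast (Finset.mem_filter.1 hn).2.1.ne_zero]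
  have hpos : 0 < ∏ n ∈ Finset.range (X + 1) with (n.Prime ∧ p ^ 2 ∣ n - 1), n :=
    Finset.prod_pos fun n hn => (Finset.mem_filter.1 hn).2.1.pos
  have h := Real.log_le_log (by exact_mod_cast hpos) (Nat.cast_le (α := ℝ).2 (prod_primes_le hp X))
  push_cast [Real.log_pow] at h
  refine h.trans ?_
  have h1 : ((X / p ^ 2 : ℕ) : ℝ) ≤ X / p ^ 2 := by
    have := Nat.cast_div_le (α := ℝ) (m := X) (n := p ^ 2)
    push_cast at this; exact this
  have h2 : 0 ≤ Real.log p := Real.log_natCast_nonneg p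
  calc 6 * ((X / p ^ 2 : ℕ) : ℝ) * Real.log p ≤ 6 * (X / p ^ 2) * Real.log p := by gcongr
    _ = _ := by ring

/-! ### Infinitude of the primes `q` with `q - 1` squarefree -/

section

open ArithmeticFunction ArithmeticFunction.vonMangoldt

theorem summable_residueClass_div_rpow {q : ℕ} (a : ZMod q) {x : ℝ} (hx : 1 < x) :
    Summable fun n : ℕ => residueClass a n / (n : ℝ) ^ x :=
  LSeries.summable_real_of_abscissaOfAbsConv_lt <|
    (abscissaOfAbsConv_residueClass_le_one a).trans_lt <| mod_cast hx

/-- Upper counterpart of Mathlib's `LSeries_residueClass_lower_bound`: the L-series minus its polar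
part is continuous on `[1, 2]`, hence bounded there. -/
theorem tsum_residueClass_upper_bound {q : ℕ} [NeZero q] {a : ZMod q} (ha : IsUnit a) :
    ∃ C : ℝ, ∀ x ∈ Set.Ioc (1 : ℝ) 2,
      ∑' n, residueClass a n / (n : ℝ) ^ x ≤ (q.totient : ℝ)⁻¹ / (x - 1) + C := by
  have H {x : ℝ} (hx : 1 < x) :
      ∑' n, residueClass a n / (n : ℝ) ^ x =
        (LFunctionResidueClassAux a x).re + (q.totient : ℝ)⁻¹ / (x - 1) := by
    refine Complex.ofReal_injective ?_
    simp only [Complex.ofReal_tsum, Complex.ofReal_div, Complex.ofReal_cpow (Nat.cast_nonneg _),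
      Complex.ofReal_natCast, Complex.ofReal_add, Complex.ofReal_inv, Complex.ofReal_sub,
      Complex.ofReal_one]
    simp_rw [← LFunctionResidueClassAux_real ha hx,
      eqOn_LFunctionResidueClassAux ha <| Set.mem_ofPred.mpr (Complex.ofReal_re x ▸ hx),
      sub_add_cancel, LSeries, LSeries.term]
    refine tsum_congr fun n ↦ ?_
    split_ifs with hn
    · simp only [hn, residueClass_apply_zero, Complex.ofReal_zero, zero_div]
    · rfl
  have : ContinuousOn (fun x : ℝ ↦ (LFunctionResidueClassAux a x).re) (Set.Icc 1 2) :=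
    Complex.continuous_re.continuousOn.comp (t := Set.univ)
      (continuousOn_LFunctionResidueClassAux a)
      (fun ⦃x⦄ a ↦ trivial) |>.comp Complex.continuous_ofReal.continuousOn fun x hx ↦ by
        simpa only [Set.mem_ofPred_eq, Complex.ofReal_re] using hx.1
  obtain ⟨C, hC⟩ := bddAbove_def.mp <| IsCompact.bddAbove_image isCompact_Icc this
  refine ⟨C, fun x hx ↦ ?_⟩
  rw [H hx.1, add_comm, add_le_add_iff_left]
  exact hC _ (Set.mem_image_of_mem (fun x : ℝ ↦ (LFunctionResidueClassAux a x).re)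
    (Set.mem_Icc_of_Ioc hx))

/-- Abel summation: nonnegative partial sums stay nonnegative after multiplying the terms by
nonnegative decreasing weights. -/
theorem sum_mul_nonneg_of_antitone {h w : ℕ → ℝ} (hw : Antitone w) (hw0 : ∀ n, 0 ≤ w n)
    (hh : ∀ n, 0 ≤ ∑ i ∈ Finset.range n, h i) (n : ℕ) :
    0 ≤ ∑ i ∈ Finset.range n, h i * w i := by
  have key : ∀ n, (∑ i ∈ Finset.range n, h i) * w n ≤ ∑ i ∈ Finset.range n, h i * w i := by
    intro n
    induction n with
    | zero => simp
    | succ n ih =>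
      have h1 := mul_le_mul_of_nonneg_left (hw n.le_succ) (hh (n + 1))
      rw [Finset.sum_range_succ (fun i => h i * w i)]
      rw [Finset.sum_range_succ h, add_mul] at h1
      rw [Finset.sum_range_succ h, add_mul]
      simp only [Nat.succ_eq_add_one] at h1
      linarith
  exact (mul_nonneg (hh n) (hw0 n)).trans (key n)

/-- A linear bound on the partial sums of `f` turns into a bound of its Dirichlet series by that of
the constant function `ε`. -/
theorem sum_div_rpow_le {f : ℕ → ℝ} (hf0 : f 0 = 0) {ε : ℝ} (hε : 0 ≤ ε)
    (hf : ∀ X : ℕ, ∑ n ∈ Finset.range (X + 1), f n ≤ ε * X) {x : ℝ} (hx : 1 < x) (N : ℕ) :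
    ∑ n ∈ Finset.range N, f n / (n : ℝ) ^ x ≤ ε * ∑' n : ℕ, 1 / (n : ℝ) ^ x := by
  -- Indices are shifted by one because `1 / 0 ^ x = 0` breaks monotonicity of the weights at `0`.
  rcases N with _ | N
  · simpa using mul_nonneg hε (tsum_nonneg fun n : ℕ => by positivity)
  have h := sum_mul_nonneg_of_antitone (h := fun i => ε - f (i + 1))
    (w := fun i : ℕ => 1 / ((i + 1 : ℕ) : ℝ) ^ x)
    (fun i j hij => one_div_le_one_div_of_le (by positivity)
      (Real.rpow_le_rpow (by positivity) (by exact_mod_cast Nat.succ_le_succ hij) (by linarith)))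
    (fun n => by positivity) (fun n => by
      have := hf n
      rw [Finset.sum_range_succ', hf0] at this
      simp only [Finset.sum_sub_distrib, Finset.sum_const, Finset.card_range, nsmul_eq_mul]
      linarith) N
  have hle := (Real.summable_one_div_nat_rpow.2 hx).sum_le_tsum (Finset.range (N + 1))
    fun n _ => by positivity
  rw [Finset.sum_range_succ', Nat.cast_zero, Real.zero_rpow (by linarith), div_zero,
    add_zero] at hle
  rw [Finset.sum_range_succ', hf0, zero_div, add_zero]
  refine le_trans ?_ (mul_le_mul_of_nonneg_left hle hε)
  rw [← sub_nonneg, Finset.mul_sum, ← Finset.sum_sub_distrib]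
  simpa only [mul_one_div, sub_div] using h

/-- The primes `n` for which `n - 1` is divisible by the square of a prime outside `s`,
weighted by `log n`. -/
noncomputable def tailWeight (s : Finset ℕ) (n : ℕ) : ℝ :=
  open Classical in if n.Prime ∧ ∃ p, p.Prime ∧ p ∉ s ∧ p ^ 2 ∣ n - 1 then Real.log n else 0

theorem summable_log_div_sq : Summable fun n : ℕ => 6 * (Real.log n / (n : ℝ) ^ 2) := by
  refine Summable.mul_left 6 ?_
  have h : Summable fun n : ℕ => 2 * (1 / (n : ℝ) ^ (3 / 2 : ℝ)) :=
    (Real.summable_one_div_nat_rpow.2 (by norm_num)).mul_left 2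
  refine Summable.of_nonneg_of_le
    (fun n => div_nonneg (Real.log_natCast_nonneg n) (by positivity)) (fun n => ?_) h
  rcases Nat.eq_zero_or_pos n with rfl | hn
  · simp
  have hn' : (0 : ℝ) < n := by exact_mod_cast hn
  have h1 := Real.log_le_rpow_div hn'.le (show (0 : ℝ) < 1 / 2 by norm_num)
  have h2 : (n : ℝ) ^ (3 / 2 : ℝ) * (n : ℝ) ^ (1 / 2 : ℝ) = (n : ℝ) ^ 2 := by
    rw [← Real.rpow_add hn', ← Real.rpow_natCast]; norm_num
  rw [← h2, mul_one_div, div_le_div_iff₀ (by positivity) (by positivity)]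
  have h3 : 0 ≤ (n : ℝ) ^ (3 / 2 : ℝ) := by positivity
  nlinarith

/-- The primes `q` with `q ≡ 1 mod p ^ 2` for some prime `p ∉ s` have arbitrarily small upper density,
for a suitable finite set `s`. -/
theorem exists_tail_bound {ε : ℝ} (hε : 0 < ε) :
    ∃ s : Finset ℕ, ∀ X : ℕ, ∑ n ∈ Finset.range (X + 1), tailWeight s n ≤ ε * X := by
  obtain ⟨s, hs⟩ := summable_iff_vanishing_norm.1 summable_log_div_sq ε hε
  refine ⟨s, fun X => ?_⟩
  set T := Finset.filter (fun p => p.Prime ∧ p ∉ s) (Finset.range (X + 1)) with hT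
  have h1 : ∀ n ∈ Finset.range (X + 1), tailWeight s n ≤
      ∑ p ∈ T, if n.Prime ∧ p ^ 2 ∣ n - 1 then Real.log n else 0 := by
    intro n hn
    have hnn : ∀ p ∈ T, (0 : ℝ) ≤ if n.Prime ∧ p ^ 2 ∣ n - 1 then Real.log n else 0 := by
      intro p _
      split_ifs
      exacts [Real.log_natCast_nonneg n, le_rfl]
    unfold tailWeight
    split_ifs with h
    · obtain ⟨hnp, p, hp, hps, hpn⟩ := h
      have hn2 := hnp.two_le
      have hle := Nat.le_of_dvd (by omega) hpn
      have hpT : p ∈ T := by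
        have : p ≤ p ^ 2 := Nat.le_self_pow two_ne_zero p
        simp only [hT, Finset.mem_filter, Finset.mem_range] at hn ⊢
        exact ⟨by omega, hp, hps⟩
      have := Finset.single_le_sum hnn hpT
      simpa [hnp, hpn] using this
    · exact Finset.sum_nonneg hnn
  calc ∑ n ∈ Finset.range (X + 1), tailWeight s n
      ≤ ∑ n ∈ Finset.range (X + 1), ∑ p ∈ T, if n.Prime ∧ p ^ 2 ∣ n - 1 then Real.log n else 0 :=
        Finset.sum_le_sum h1
    _ = ∑ p ∈ T, ∑ n ∈ Finset.range (X + 1) with (n.Prime ∧ p ^ 2 ∣ n - 1), Real.log n := by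
        rw [Finset.sum_comm]
        exact Finset.sum_congr rfl fun p _ => (Finset.sum_filter _ _).symm
    _ ≤ ∑ p ∈ T, 6 * (Real.log p / p ^ 2) * X :=
        Finset.sum_le_sum fun p hp => sum_log_primes_le (Finset.mem_filter.1 hp).2.1 X
    _ = (∑ p ∈ T, 6 * (Real.log p / p ^ 2)) * X := by rw [Finset.sum_mul]
    _ ≤ ε * X := by
        refine mul_le_mul_of_nonneg_right ?_ (Nat.cast_nonneg X)
        refine (le_abs_self _).trans (hs T ?_).le
        exact Finset.disjoint_left.2 fun p hp => (Finset.mem_filter.1 hp).2.2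

/-- Comparison with `∑_{n ≥ 2} 1 / (n (n - 1)) = 1`, where the term `1 / 12` at `n = 4` is not used by
any prime. -/
theorem sum_inv_totient_sq_le (s : Finset ℕ) (hs : ∀ p ∈ s, p.Prime) :
    ∑ p ∈ s, (((p ^ 2).totient : ℕ) : ℝ)⁻¹ ≤ 11 / 12 := by
  set g : ℕ → ℝ := fun n => 1 / (n * (n - 1)) with hg
  have hg0 : ∀ n, 0 ≤ g n := by
    intro n
    rcases Nat.eq_zero_or_pos n with rfl | hn
    · simp [hg]
    · have : (1 : ℝ) ≤ n := by exact_mod_cast hn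
      exact div_nonneg zero_le_one (mul_nonneg (by linarith) (by linarith))
  have htel : ∀ M : ℕ, ∑ n ∈ Finset.range (M + 2), g n = 1 - 1 / (M + 1) := by
    intro M
    induction M with
    | zero => simp [Finset.sum_range_succ, hg]
    | succ M ih =>
      rw [Finset.sum_range_succ, ih]
      simp only [hg]
      push_cast
      have : (M : ℝ) + 1 ≠ 0 := by positivity
      have : (M : ℝ) + 2 ≠ 0 := by positivity
      have : (M : ℝ) + 1 + 1 ≠ 0 := by positivity
      rw [show (M : ℝ) + 2 - 1 = M + 1 by ring]
      field_simp
      ring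
  have h4 : 4 ∉ s := fun h => by have := hs 4 h; norm_num at this
  have hle : ∑ n ∈ insert 4 s, g n ≤ 1 := by
    calc ∑ n ∈ insert 4 s, g n ≤ ∑ n ∈ Finset.range ((insert 4 s).sup id + 2), g n := by
          refine Finset.sum_le_sum_of_subset_of_nonneg (fun n hn => ?_) fun n _ _ => hg0 n
          have := Finset.le_sup (f := id) hn
          simp only [id] at this
          exact Finset.mem_range.2 (Nat.lt_succ_of_le (this.trans (Nat.le_succ _)))
      _ ≤ 1 := by
          rw [htel]
          have : (0 : ℝ) ≤ 1 / ((((insert 4 s).sup id : ℕ) : ℝ) + 1) := by positivity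
          linarith
  rw [Finset.sum_insert h4] at hle
  have h12 : g 4 = 1 / 12 := by norm_num [hg]
  have : ∑ p ∈ s, (((p ^ 2).totient : ℕ) : ℝ)⁻¹ = ∑ p ∈ s, g p := by
    refine Finset.sum_congr rfl fun p hp => ?_
    rw [Nat.totient_prime_pow (hs p hp) two_pos]
    push_cast [Nat.cast_sub (hs p hp).one_le]
    simp [hg]
  rw [this]
  rw [h12] at hle
  linarith

/-- The pointwise covering of the von Mangoldt function: prime powers that are not primes, the primes
in `mirskySet`, the primes `≡ 1 mod p ^ 2` with `p ∈ s`, and the remaining primes. The residue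
class `1 : ZMod 1` contains every integer. -/
theorem vonMangoldt_le_weights (hfin : mirskySet.Finite) (s : Finset ℕ) (n : ℕ) :
    (residueClass (1 : ZMod 1) n) ≤ (if n.Prime then 0 else residueClass (1 : ZMod 1) n) +
      (if n ∈ hfin.toFinset then Real.log n else 0) +
      ∑ p ∈ s with p.Prime, residueClass (1 : ZMod (p ^ 2)) n + tailWeight s n := by
  classical
  have h0 : 0 ≤ residueClass (1 : ZMod 1) n := residueClass_nonneg _ n
  have h1 : ∀ p ∈ Finset.filter Nat.Prime s, 0 ≤ residueClass (1 : ZMod (p ^ 2)) n :=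
    fun p _ => residueClass_nonneg _ n
  have h1' := Finset.sum_nonneg h1
  have hlog : 0 ≤ Real.log n := Real.log_natCast_nonneg n
  have h2 : 0 ≤ tailWeight s n := by unfold tailWeight; split_ifs; exacts [hlog, le_rfl]
  have h3 : 0 ≤ (if n ∈ hfin.toFinset then Real.log n else 0) := by
    split_ifs; exacts [hlog, le_rfl]
  by_cases hn : n.Prime
  swap
  · rw [if_neg hn]; linarith
  rw [if_pos hn]
  have hle : residueClass (1 : ZMod 1) n ≤ Real.log n := by
    rw [← vonMangoldt_apply_prime hn]; exact residueClass_le _ n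
  refine hle.trans ?_
  by_cases hm : n ∈ hfin.toFinset
  · rw [if_pos hm]; linarith
  have hsq : ¬ Squarefree (n - 1) := fun h => hm (hfin.mem_toFinset.2 ⟨hn, h⟩)
  rw [Nat.squarefree_iff_prime_squarefree] at hsq
  push Not at hsq
  obtain ⟨p, hp, hpn⟩ := hsq
  rw [← pow_two] at hpn
  by_cases hps : p ∈ s
  · have hmem : p ∈ Finset.filter Nat.Prime s := Finset.mem_filter.2 ⟨hps, hp⟩
    have := Finset.single_le_sum h1 hmem
    have hcl : residueClass (1 : ZMod (p ^ 2)) n = Real.log n := by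
      rw [residueClass, Set.indicator_of_mem, vonMangoldt_apply_prime hn]
      change (n : ZMod (p ^ 2)) = 1
      have := (ZMod.natCast_eq_zero_iff _ _).2 hpn
      rw [Nat.cast_sub hn.one_le, sub_eq_zero] at this
      simpa using this
    linarith
  · have : tailWeight s n = Real.log n := if_pos ⟨hn, p, hp, hps, hpn⟩
    linarith

/-- **Mirsky**: there are infinitely many primes `q` with `q - 1` squarefree. -/
theorem mirskySet_infinite : mirskySet.Infinite := by
  intro hfin
  obtain ⟨s, hs⟩ := exists_tail_bound (show (0 : ℝ) < 1 / 24 by norm_num)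
  obtain ⟨C₀, hC₀⟩ := LSeries_residueClass_lower_bound (q := 1) (a := 1) isUnit_one
  have hup : ∀ p : ℕ, ∃ C : ℝ, p.Prime → ∀ x ∈ Set.Ioc (1 : ℝ) 2,
      ∑' n, residueClass (1 : ZMod (p ^ 2)) n / (n : ℝ) ^ x ≤
        ((p ^ 2).totient : ℝ)⁻¹ / (x - 1) + C := by
    intro p
    by_cases hp : p.Prime
    · have : NeZero (p ^ 2) := ⟨pow_ne_zero 2 hp.ne_zero⟩
      obtain ⟨C, hC⟩ := tsum_residueClass_upper_bound (q := p ^ 2) (a := 1) isUnit_one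
      exact ⟨C, fun _ => hC⟩
    · exact ⟨0, fun h => absurd h hp⟩
  choose C hC using hup
  set K₁ := ∑' n : ℕ, (if n.Prime then 0 else residueClass (1 : ZMod 1) n) / n
  set K₂ := ∑ n ∈ hfin.toFinset, Real.log n
  set S := ∑ p ∈ s with p.Prime, (((p ^ 2).totient : ℕ) : ℝ)⁻¹ with hS
  set K₃ := ∑ p ∈ s with p.Prime, C p
  have hS' : S ≤ 11 / 12 := sum_inv_totient_sq_le _ fun p hp => (Finset.mem_filter.1 hp).2
  have main : ∀ x ∈ Set.Ioc (1 : ℝ) 2, 1 / (x - 1) - C₀ ≤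
      K₁ + K₂ + (S / (x - 1) + K₃) + 1 / 24 * ∑' n : ℕ, 1 / (n : ℝ) ^ x := by
    intro x hx
    have h := hC₀ hx
    simp only [Nat.totient_one, Nat.cast_one, inv_one] at h
    refine h.trans ?_
    refine Real.tsum_le_of_sum_range_le
      (fun n => div_nonneg (residueClass_nonneg _ n) (by positivity)) fun N => ?_
    have hpow : ∀ n : ℕ, n ≠ 0 → (n : ℝ) ≤ (n : ℝ) ^ x := by
      intro n hn
      have : (1 : ℝ) ≤ n := by exact_mod_cast Nat.one_le_iff_ne_zero.2 hn
      conv_lhs => rw [← Real.rpow_one n]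
      exact Real.rpow_le_rpow_of_exponent_le this hx.1.le
    have b1 : ∑ n ∈ Finset.range N, (if n.Prime then 0 else residueClass (1 : ZMod 1) n) /
        (n : ℝ) ^ x ≤ K₁ := by
      have hnn : ∀ n : ℕ, 0 ≤ (if n.Prime then 0 else residueClass (1 : ZMod 1) n) := by
        intro n; split_ifs; exacts [le_rfl, residueClass_nonneg _ n]
      refine le_trans (Finset.sum_le_sum fun n _ => ?_)
        ((summable_residueClass_non_primes_div (1 : ZMod 1)).sum_le_tsum (Finset.range N)
          fun n _ => div_nonneg (hnn n) (Nat.cast_nonneg n))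
      rcases Nat.eq_zero_or_pos n with rfl | hn
      · simp
      · exact div_le_div_of_nonneg_left (hnn n) (by exact_mod_cast hn) (hpow n hn.ne')
    have b2 : ∑ n ∈ Finset.range N, (if n ∈ hfin.toFinset then Real.log n else 0) /
        (n : ℝ) ^ x ≤ K₂ := by
      calc _ ≤ ∑ n ∈ Finset.range N, (if n ∈ hfin.toFinset then Real.log n else 0) := by
            refine Finset.sum_le_sum fun n _ => ?_
            split_ifs with hn
            · have h1 := (hfin.mem_toFinset.1 hn).1
              refine div_le_self (Real.log_natCast_nonneg n) (le_trans ?_ (hpow n h1.ne_zero))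
              exact_mod_cast h1.one_le
            · simp
        _ ≤ K₂ := by
            rw [← Finset.sum_filter]
            refine Finset.sum_le_sum_of_subset_of_nonneg (fun n hn => (Finset.mem_filter.1 hn).2)
              fun n _ _ => Real.log_natCast_nonneg n
    have b3 : ∑ p ∈ s with p.Prime, ∑ n ∈ Finset.range N,
        residueClass (1 : ZMod (p ^ 2)) n / (n : ℝ) ^ x ≤ S / (x - 1) + K₃ := by
      rw [hS, Finset.sum_div, ← Finset.sum_add_distrib]
      refine Finset.sum_le_sum fun p hp => le_trans ?_ (hC p (Finset.mem_filter.1 hp).2 x hx)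
      exact (summable_residueClass_div_rpow _ hx.1).sum_le_tsum _
        fun n _ => div_nonneg (residueClass_nonneg _ n) (by positivity)
    have b4 := sum_div_rpow_le (f := tailWeight s) (by simp [tailWeight])
      (by norm_num) hs hx.1 N
    calc ∑ n ∈ Finset.range N, residueClass (1 : ZMod 1) n / (n : ℝ) ^ x
        ≤ ∑ n ∈ Finset.range N, ((if n.Prime then 0 else residueClass (1 : ZMod 1) n) +
          (if n ∈ hfin.toFinset then Real.log n else 0) +
          ∑ p ∈ s with p.Prime, residueClass (1 : ZMod (p ^ 2)) n + tailWeight s n) /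
            (n : ℝ) ^ x :=
          Finset.sum_le_sum fun n _ =>
            div_le_div_of_nonneg_right (vonMangoldt_le_weights hfin s n) (by positivity)
      _ ≤ _ := by
          simp only [add_div, Finset.sum_add_distrib, Finset.sum_div]
          rw [Finset.sum_comm (s := Finset.range N)]
          linarith
  -- Multiplying `main` by `x - 1` and letting `x → 1⁺` gives `1 ≤ S + 1 / 24 < 1`.
  have hx0 : Filter.Tendsto (fun x : ℝ => x - 1) (nhdsWithin 1 (Set.Ioi 1)) (nhds 0) := by
    have : Filter.Tendsto (fun x : ℝ => x - 1) (nhds 1) (nhds (1 - 1)) :=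
      (continuous_sub_right 1).tendsto 1
    rw [sub_self] at this
    exact this.mono_left nhdsWithin_le_nhds
  have hlim : Filter.Tendsto (fun x : ℝ => (K₁ + K₂ + K₃ + C₀) * (x - 1) + S +
      1 / 24 * ((x - 1) * ∑' n : ℕ, 1 / (n : ℝ) ^ x)) (nhdsWithin 1 (Set.Ioi 1))
      (nhds ((K₁ + K₂ + K₃ + C₀) * 0 + S + 1 / 24 * 1)) :=
    ((hx0.const_mul _).add_const _).add (tendsto_sub_mul_tsum_nat_rpow.const_mul _)
  have hge : (1 : ℝ) ≤ (K₁ + K₂ + K₃ + C₀) * 0 + S + 1 / 24 * 1 := by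
    refine ge_of_tendsto hlim ?_
    filter_upwards [Ioc_mem_nhdsGT (show (1 : ℝ) < 2 by norm_num)] with x hx
    have hpos : 0 < x - 1 := sub_pos.2 hx.1
    have h := mul_le_mul_of_nonneg_left (main x hx) hpos.le
    have e1 : (x - 1) * (1 / (x - 1) - C₀) = 1 - C₀ * (x - 1) := by field_simp
    have e2 : (x - 1) * (S / (x - 1)) = S := by field_simp
    rw [e1] at h
    linear_combination h + e2
  linarith

end

/-! ### The cyclotomic field -/

instance mirsky_isCyclotomicExtension :
    IsCyclotomicExtension mirskySet ℚ mirskyCyclotomicField := by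
  have h : mirskyCyclotomicField = IntermediateField.adjoin ℚ
      {x : AlgebraicClosure ℚ | ∃ q ∈ mirskySet, q ≠ 0 ∧ x ^ q = 1} := by
    unfold mirskyCyclotomicField
    congr 1
    ext x
    constructor
    · rintro ⟨q, hq, h⟩
      exact ⟨q, hq, hq.1.ne_zero, h⟩
    · rintro ⟨q, hq, _, h⟩
      exact ⟨q, hq, h⟩
  rw [h]
  refine IntermediateField.isCyclotomicExtension_adjoin_of_exists_isPrimitiveRoot _ _ _
    fun n _ hn => ?_
  have : NeZero n := ⟨hn⟩
  exact HasEnoughRootsOfUnity.exists_primitiveRoot (AlgebraicClosure ℚ) n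

instance mirsky_isGalois : IsGalois ℚ mirskyCyclotomicField :=
  IsCyclotomicExtension.isGalois mirskySet ℚ mirskyCyclotomicField

/-! ### Roots of unity in finite extensions of `ℚ_p` -/

/-- If `‖ξ - 1‖ < 1` then `n = -∑_{i < n} (ξ ^ i - 1)` would have norm less than `1`. -/
theorem norm_sub_one_of_pow_eq_one {p : ℕ} [Fact p.Prime] {ξ : PadicAlgCl p} {n : ℕ}
    (hn : ¬ p ∣ n) (hξ : ξ ^ n = 1) (hξ1 : ξ ≠ 1) : 1 ≤ ‖ξ - 1‖ := by
  by_contra hlt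
  push Not at hlt
  have hsum : ∑ i ∈ Finset.range n, ξ ^ i = 0 := by
    have := geom_sum_mul ξ n
    rw [hξ, sub_self] at this
    exact (mul_eq_zero.1 this).resolve_right (sub_ne_zero.2 hξ1)
  have hn0 : n ≠ 0 := by rintro rfl; exact hn (dvd_zero p)
  have hnorm : ‖ξ‖ = 1 := by
    have := congrArg norm hξ
    rw [norm_pow, norm_one] at this
    exact (pow_eq_one_iff_of_nonneg (norm_nonneg _) hn0).1 this
  have hpow : ∀ i : ℕ, ‖ξ ^ i - 1‖ < 1 := by
    intro i
    rw [← geom_sum_mul ξ i, norm_mul]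
    have : ‖∑ j ∈ Finset.range i, ξ ^ j‖ ≤ 1 :=
      IsUltrametricDist.norm_sum_le_of_forall_le_of_nonneg zero_le_one
        fun j _ => by rw [norm_pow, hnorm, one_pow]
    calc _ ≤ 1 * ‖ξ - 1‖ := by gcongr
      _ < 1 := by rwa [one_mul]
  have hcast : ‖(n : PadicAlgCl p)‖ = 1 := by
    have h1 := PadicAlgCl.norm_extends p (n : ℚ_[p])
    have h2 : ‖(n : ℚ_[p])‖ = 1 := by
      rw [Padic.norm_natCast_eq_one_iff]
      exact ((Nat.Prime.coprime_iff_not_dvd Fact.out).2 hn)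
    rw [h2] at h1
    simpa using h1
  have hneg : (n : PadicAlgCl p) = - ∑ i ∈ Finset.range n, (ξ ^ i - 1) := by
    simp [Finset.sum_sub_distrib, hsum]
  obtain ⟨i, _, hi⟩ := IsUltrametricDist.exists_norm_finsetSum_le_of_nonempty
    (Finset.nonempty_range_iff.2 hn0) (fun i => ξ ^ i - 1)
  rw [hneg, norm_neg] at hcast
  linarith [hpow i]

/-- A finite extension of `ℚ_p` contains only finitely many of the `ζ_q`. -/
theorem not_hasBoundedLocalDegreesAt (p : ℕ) (hp : p.Prime) :
    ¬ HasBoundedLocalDegreesAt p hp mirskyCyclotomicField := by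
  have : Fact p.Prime := ⟨hp⟩
  rintro ⟨E, _, _, hE, ⟨φ⟩⟩
  let ψ : E →ₐ[ℚ_[p]] PadicAlgCl p := IsAlgClosed.lift
  let V : Submodule ℚ_[p] (PadicAlgCl p) := LinearMap.range ψ.toLinearMap
  have hV : FiniteDimensional ℚ_[p] V := inferInstance
  have : ProperSpace V := FiniteDimensional.proper ℚ_[p] V
  have hroot : ∀ q : mirskySet, ∃ ζ : V, IsPrimitiveRoot (ζ : PadicAlgCl p) q := by
    intro q
    obtain ⟨r, hr⟩ := IsCyclotomicExtension.exists_isPrimitiveRoot ℚ mirskyCyclotomicField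
      q.2 q.2.1.ne_zero
    exact ⟨⟨ψ (φ r), φ r, rfl⟩, (hr.map_of_injective φ.injective).map_of_injective ψ.injective⟩
  choose ζ hζ using hroot
  have hnorm : ∀ q : mirskySet, ‖(ζ q : PadicAlgCl p)‖ = 1 := fun q => by
    have := congrArg norm (hζ q).pow_eq_one
    rw [norm_pow, norm_one] at this
    exact (pow_eq_one_iff_of_nonneg (norm_nonneg _) q.2.1.ne_zero).1 this
  have hsep : ∀ a b : mirskySet, (a : ℕ) ≠ p → (b : ℕ) ≠ p → a ≠ b → 1 ≤ dist (ζ a) (ζ b) := by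
    intro a b ha hb hab
    have hb0 : (ζ b : PadicAlgCl p) ≠ 0 := (hζ b).ne_zero b.2.1.ne_zero
    have hne : (ζ a : PadicAlgCl p) / ζ b ≠ 1 := by
      intro h
      rw [div_eq_one_iff_eq hb0] at h
      exact hab (Subtype.ext ((hζ a).unique (h ▸ hζ b)))
    have hpow : ((ζ a : PadicAlgCl p) / ζ b) ^ ((a : ℕ) * b) = 1 := by
      rw [div_pow, pow_mul, (hζ a).pow_eq_one, one_pow, mul_comm, pow_mul, (hζ b).pow_eq_one,
        one_pow, div_one]
    have hdvd : ¬ p ∣ (a : ℕ) * b := by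
      rw [hp.dvd_mul, Nat.prime_dvd_prime_iff_eq hp a.2.1, Nat.prime_dvd_prime_iff_eq hp b.2.1]
      rintro (h | h)
      exacts [ha h.symm, hb h.symm]
    have h1 := norm_sub_one_of_pow_eq_one hdvd hpow hne
    rw [div_sub_one hb0, norm_div, hnorm b, div_one] at h1
    rwa [Subtype.dist_eq, dist_eq_norm]
  have hinf : {q : mirskySet | (q : ℕ) ≠ p}.Infinite := by
    have : Infinite mirskySet := mirskySet_infinite.to_subtype
    have hfin : {q : mirskySet | (q : ℕ) = p}.Finite :=
      Set.Subsingleton.finite fun a ha b hb => Subtype.ext (ha.trans hb.symm)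
    exact hfin.infinite_compl
  let e := hinf.natEmbedding
  have hball : ∀ n : ℕ, ζ (e n) ∈ Metric.closedBall (0 : V) 1 := fun n => by
    rw [mem_closedBall_zero_iff]
    exact (hnorm _).le
  obtain ⟨x, _, f, hf, hlim⟩ := (isCompact_closedBall (0 : V) 1).tendsto_subseq hball
  obtain ⟨N, hN⟩ := Metric.cauchySeq_iff.1 hlim.cauchySeq 1 one_pos
  have hlt := hN N le_rfl (N + 1) N.le_succ
  refine absurd (hsep (e (f N)) (e (f (N + 1))) (e _).2 (e _).2 fun h => ?_) (not_le.2 hlt)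
  exact N.succ_ne_self (hf.injective (e.injective (Subtype.ext h))).symm

/-! ### The Galois group -/

/-- Irreducibility of the cyclotomic polynomials over `ℚ`, in terms of automorphisms of the field. -/
theorem exists_gal_apply_eq_pow {n k : ℕ} (hn : 0 < n) {ζ : mirskyCyclotomicField}
    (hζ : IsPrimitiveRoot ζ n) (hk : k.Coprime n) :
    ∃ σ : mirskyCyclotomicField ≃ₐ[ℚ] mirskyCyclotomicField, σ ζ = ζ ^ k := by
  refine minpoly.exists_algEquiv_of_root' (Algebra.IsAlgebraic.isAlgebraic ζ) ?_
  rw [← Polynomial.cyclotomic_eq_minpoly_rat hζ hn,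
    Polynomial.cyclotomic_eq_minpoly_rat (hζ.pow_of_coprime _ hk) hn]
  exact minpoly.aeval _ _

theorem isPrimitiveRoot_prod {R : Type*} [CommRing R] [IsDomain R] (ζ : mirskySet → R)
    (hζ : ∀ q, IsPrimitiveRoot (ζ q) q) (I : Finset mirskySet) :
    IsPrimitiveRoot (∏ q ∈ I, ζ q) (∏ q ∈ I, (q : ℕ)) := by
  classical
  induction I using Finset.induction_on with
  | empty => simp
  | insert a I ha ih =>
    rw [Finset.prod_insert ha, Finset.prod_insert ha]
    have hcop : (a : ℕ).Coprime (∏ q ∈ I, (q : ℕ)) := Nat.Coprime.prod_right fun b hb =>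
      (Nat.coprime_primes a.2.1 b.2.1).2 fun h => ha (Subtype.ext h ▸ hb)
    rw [IsPrimitiveRoot.iff_orderOf,
      (Commute.all _ _).orderOf_mul_eq_mul_orderOf_of_coprime
        (by rwa [← (hζ a).eq_orderOf, ← ih.eq_orderOf]), ← (hζ a).eq_orderOf, ← ih.eq_orderOf]

/-- The action on finitely many of the `ζ_q` can be prescribed independently, by the Chinese
remainder theorem applied to the primitive root of unity `∏ ζ_q`. -/
theorem exists_gal_apply_eq_pow_family (ζ : mirskySet → mirskyCyclotomicField)
    (hζ : ∀ q, IsPrimitiveRoot (ζ q) q) (k : mirskySet → ℕ) (hk : ∀ q, (k q).Coprime q)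
    (I : Finset mirskySet) :
    ∃ σ : mirskyCyclotomicField ≃ₐ[ℚ] mirskyCyclotomicField, ∀ q ∈ I, σ (ζ q) = ζ q ^ k q := by
  obtain ⟨m, hm⟩ := Nat.chineseRemainderOfFinset k (fun q : mirskySet => (q : ℕ)) I
    (fun q _ => q.2.1.ne_zero) (fun a _ b _ hab =>
      (Nat.coprime_primes a.2.1 b.2.1).2 fun h => hab (Subtype.ext h))
  have hcop : m.Coprime (∏ q ∈ I, (q : ℕ)) := Nat.Coprime.prod_right fun q hq => by
    have := (hm q hq).gcd_eq
    exact this.trans (hk q)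
  have hpos : 0 < ∏ q ∈ I, (q : ℕ) := Finset.prod_pos fun q _ => q.2.1.pos
  have : NeZero (∏ q ∈ I, (q : ℕ)) := ⟨hpos.ne'⟩
  have hprim := isPrimitiveRoot_prod ζ hζ I
  obtain ⟨σ, hσ⟩ := exists_gal_apply_eq_pow hpos hprim hcop
  refine ⟨σ, fun q hq => ?_⟩
  obtain ⟨j, _, hj⟩ := hprim.eq_pow_of_pow_eq_one (ξ := ζ q)
    ((hζ q).pow_eq_one_iff_dvd _ |>.2 (Finset.dvd_prod_of_mem _ hq))
  have h1 : σ (ζ q) = ζ q ^ m := by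
    rw [← hj, map_pow, hσ, ← pow_mul, ← pow_mul, mul_comm]
  rw [h1]
  exact pow_eq_pow_of_modEq (hm q hq) (hζ q).pow_eq_one

theorem exists_gal_mulEquiv :
    ∃ e : (mirskyCyclotomicField ≃ₐ[ℚ] mirskyCyclotomicField) ≃*
        (∀ q : mirskySet, Multiplicative (ZMod ((q : ℕ) - 1))),
      Continuous e ∧ Continuous e.symm := by
  have hne (q : mirskySet) : NeZero (q : ℕ) := ⟨q.2.1.ne_zero⟩
  have hζ (q : mirskySet) : ∃ r : mirskyCyclotomicField, IsPrimitiveRoot r (q : ℕ) :=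
    IsCyclotomicExtension.exists_isPrimitiveRoot ℚ mirskyCyclotomicField q.2 q.2.1.ne_zero
  choose ζ hζ using hζ
  have hθ (q : mirskySet) :
      Nonempty ((ZMod (q : ℕ))ˣ ≃* Multiplicative (ZMod ((q : ℕ) - 1))) := by
    have : Fact (q : ℕ).Prime := ⟨q.2.1⟩
    refine ⟨mulEquivOfCyclicCardEq ?_⟩
    rw [Nat.card_eq_fintype_card, ZMod.card_units]
    exact (Nat.card_zmod _).symm
  have θ (q : mirskySet) := (hθ q).some
  -- `χ q` is the cyclotomic character modulo `q`.
  let χ (q : mirskySet) := (hζ q).autToPow ℚ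
  have hχ (q : mirskySet) (σ τ : mirskyCyclotomicField ≃ₐ[ℚ] mirskyCyclotomicField) :
      χ q σ = χ q τ ↔ σ (ζ q) = τ (ζ q) := by
    constructor
    · intro h
      rw [← (hζ q).autToPow_spec ℚ σ, ← (hζ q).autToPow_spec ℚ τ]
      exact congrArg (fun u : (ZMod (q : ℕ))ˣ => ζ q ^ (u : ZMod (q : ℕ)).val) h
    · intro h
      rw [← (hζ q).autToPow_spec ℚ σ, ← (hζ q).autToPow_spec ℚ τ] at h
      exact Units.ext (ZMod.val_injective _ ((hζ q).pow_inj (ZMod.val_lt _) (ZMod.val_lt _) h))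
  let Φ : (mirskyCyclotomicField ≃ₐ[ℚ] mirskyCyclotomicField) →*
      (∀ q : mirskySet, Multiplicative (ZMod ((q : ℕ) - 1))) :=
    MonoidHom.pi fun q => (θ q).toMonoidHom.comp (χ q)
  have hΦ (σ) (q) : Φ σ q = θ q (χ q σ) := rfl
  have hcont : Continuous Φ := by
    refine continuous_of_continuousAt_one Φ (continuousAt_pi.2 fun q => ?_)
    refine continuousAt_const.congr (f := fun _ => 1) ?_
    have hopen := stabilizer_isOpen_of_isIntegral (K := ℚ) (ζ q)
    filter_upwards [hopen.mem_nhds (one_mem (MulAction.stabilizer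
      (mirskyCyclotomicField ≃ₐ[ℚ] mirskyCyclotomicField) (ζ q)))] with σ hσ
    have : χ q σ = χ q 1 := (hχ q σ 1).2 hσ
    rw [hΦ, this, map_one, map_one]
  have hinj : Function.Injective Φ := by
    intro σ τ h
    refine IsCyclotomicExtension.algEquiv_eq_of_apply_eq mirskySet ℚ mirskyCyclotomicField
      fun n hn _ => ⟨ζ ⟨n, hn⟩, hζ ⟨n, hn⟩, (hχ ⟨n, hn⟩ σ τ).1 ?_⟩
    exact (θ ⟨n, hn⟩).injective (congrFun h ⟨n, hn⟩)
  have hsurj : Function.Surjective Φ := by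
    intro v
    have hclosed : IsClosed (Set.range Φ) := (isCompact_range hcont).isClosed
    -- The range is dense: basic open sets only constrain finitely many coordinates.
    suffices v ∈ closure (Set.range Φ) by rwa [hclosed.closure_eq] at this
    refine mem_closure_iff.2 fun U hU hvU => ?_
    obtain ⟨I, u, hu, hIU⟩ := isOpen_pi_iff.1 hU v hvU
    obtain ⟨σ, hσ⟩ := exists_gal_apply_eq_pow_family ζ hζ
      (fun q => ((θ q).symm (v q) : ZMod (q : ℕ)).val)
      (fun q => ZMod.val_coe_unit_coprime _) I
    refine ⟨Φ σ, hIU fun q hq => ?_, σ, rfl⟩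
    have hval : χ q σ = (θ q).symm (v q) := by
      have h := hσ q hq
      rw [← (hζ q).autToPow_spec ℚ σ] at h
      exact Units.ext (ZMod.val_injective _ ((hζ q).pow_inj (ZMod.val_lt _) (ZMod.val_lt _) h))
    rw [hΦ, hval, MulEquiv.apply_symm_apply]
    exact (hu q hq).2
  let e := MulEquiv.ofBijective Φ ⟨hinj, hsurj⟩
  exact ⟨e, hcont, Continuous.continuous_symm_of_equiv_compact_to_t2 (f := e.toEquiv) hcont⟩

/-- Theorem `expl-real`, realisation with infinite local degrees.
The compositum `L` of the fields `ℚ(ζ_q)`, for `q` prime with `q - 1` squarefree, is a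
Galois extension of `ℚ` with Galois group topologically isomorphic to
`∏_{q ∈ Λ} ℤ/(q-1)ℤ`, and `L` has unbounded local degrees at every rational prime. -/
theorem mirsky_cyclotomic_realisation_unbounded :
    IsGalois ℚ mirskyCyclotomicField ∧
    (∃ e : (mirskyCyclotomicField ≃ₐ[ℚ] mirskyCyclotomicField) ≃*
        (∀ q : mirskySet, Multiplicative (ZMod ((q : ℕ) - 1))),
      Continuous e ∧ Continuous e.symm) ∧
    ∀ p : ℕ, ∀ hp : p.Prime, ¬ HasBoundedLocalDegreesAt p hp mirskyCyclotomicField := by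
  exact ⟨mirsky_isGalois, exists_gal_mulEquiv, not_hasBoundedLocalDegreesAt⟩
end

section
/- Let S be a set of rational prime numbers and let Λ = {q prime : q − 1 is squarefree}. Then there exists a Galois extension L/ℚ whose Galois group, with its Krull topology, is isomorphic as a topological group to the direct product ∏_{q∈Λ} ℤ/(q−1)ℤ with the product topology, and such that for every prime p ∈ S the field L has bounded local degrees at p, i.e. there exist a finite field extension E of ℚ_p and a ring homomorphism L → E. -/
/-! ### Characters trivial at small primes -/

lemma exists_surj_units_to_zmod {r m : ℕ} [Fact r.Prime] (h : m ∣ r - 1) :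
    ∃ ψ : (ZMod r)ˣ →* Multiplicative (ZMod m), Function.Surjective ψ := by
  have hc : Nat.card (ZMod r)ˣ = r - 1 := by
    rw [Nat.card_eq_fintype_card, ZMod.card_units]
  have e : (ZMod r)ˣ ≃* Multiplicative (ZMod (r - 1)) :=
    hc ▸ (zmodCyclicMulEquiv (G := (ZMod r)ˣ) inferInstance).symm
  refine ⟨(AddMonoidHom.toMultiplicative (ZMod.castHom h (ZMod m)).toAddMonoidHom).comp
    e.toMonoidHom, ?_⟩
  intro x
  obtain ⟨y, hy⟩ := ZMod.castHom_surjective h x.toAdd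
  refine ⟨e.symm (Multiplicative.ofAdd y), ?_⟩
  apply Multiplicative.toAdd.injective
  simpa using hy

/-- The character `χ` of `(ℤ/N)ˣ` with values in `ℤ/m` is surjective and trivial at all primes
`p ≤ n`, and all prime factors of its modulus `N ≠ 0` exceed `B`. -/
structure IsGoodChar (n B : ℕ) (m : ℕ) (N : ℕ) (χ : (ZMod N)ˣ →* Multiplicative (ZMod m)) :
    Prop where
  surj : Function.Surjective χ
  pos : N ≠ 0
  large : ∀ l, l.Prime → l ∣ N → B < l
  triv : ∀ p, p.Prime → p ≤ n → ∀ u : (ZMod N)ˣ, (u : ZMod N) = p → χ u = 1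

/-- Two primes `r ≠ s` congruent to `1` modulo `m` carry characters of `(ℤ/r)ˣ` and `(ℤ/s)ˣ` that
agree at all integers up to `n`; their quotient is the required character modulo `r * s`. -/
lemma exists_isGoodChar (n B m : ℕ) (hm : m ≠ 0) :
    ∃ (N : ℕ) (χ : (ZMod N)ˣ →* Multiplicative (ZMod m)), IsGoodChar n B m N χ := by
  classical
  have hinf : {r : ℕ | r.Prime ∧ max n B < r ∧ r ≡ 1 [MOD m]}.Infinite := by
    rw [Set.infinite_iff_exists_gt]
    intro a
    obtain ⟨p, hp, h1, h2⟩ := Nat.exists_prime_gt_modEq_one (max a (max n B)) hm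
    exact ⟨p, ⟨hp, (le_max_right _ _).trans_lt h1, h2⟩, (le_max_left _ _).trans_lt h1⟩
  have hψ : ∀ r : ℕ, ∃ ψ : (ZMod r)ˣ →* Multiplicative (ZMod m),
      (r.Prime ∧ r ≡ 1 [MOD m]) → Function.Surjective ψ := by
    intro r
    by_cases hr : r.Prime ∧ r ≡ 1 [MOD m]
    · have : Fact r.Prime := ⟨hr.1⟩
      obtain ⟨ψ, h⟩ := exists_surj_units_to_zmod (r := r) (m := m)
        ((Nat.modEq_iff_dvd' hr.1.one_le).1 hr.2.symm)
      exact ⟨ψ, fun _ => h⟩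
    · exact ⟨1, fun h => absurd h hr⟩
  choose ψ hψ using hψ
  have : NeZero m := ⟨hm⟩
  -- The values of `ψ r` at the integers up to `n`: only finitely many such vectors exist.
  let v : ℕ → (Fin (n + 1) → Multiplicative (ZMod m)) := fun r p =>
    if h : IsUnit ((p : ℕ) : ZMod r) then ψ r h.unit else 1
  obtain ⟨r, ⟨hr, hrB, hr1⟩, s, ⟨hs, hsB, hs1⟩, hrs, hv⟩ :=
    Set.Infinite.exists_ne_map_eq_of_mapsTo hinf (f := v) (t := Set.univ)
      (fun _ _ => Set.mem_univ _) Set.finite_univ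
  have hco : r.Coprime s := (Nat.coprime_primes hr hs).2 hrs
  let α := ZMod.unitsMap (Dvd.intro s rfl : r ∣ r * s)
  let β := ZMod.unitsMap (Dvd.intro_left r rfl : s ∣ r * s)
  refine ⟨r * s, ((ψ r).comp α) / ((ψ s).comp β), ?_, mul_ne_zero hr.ne_zero hs.ne_zero, ?_, ?_⟩
  · intro x
    obtain ⟨y, hy⟩ := hψ r ⟨hr, hr1⟩ x
    let e := (Units.mapEquiv (ZMod.chineseRemainder hco).toMulEquiv).trans MulEquiv.prodUnits
    obtain ⟨u, hu⟩ := e.surjective (y, 1)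
    have h1 : α u = y := by
      have h : ((u : ZMod (r * s)).cast : ZMod r × ZMod s).1 = y :=
        congrArg (fun z => ((z.1 : (ZMod r)ˣ) : ZMod r)) hu
      rw [Prod.fst_zmod_cast] at h
      exact Units.ext h
    have h2 : β u = 1 := by
      have h : ((u : ZMod (r * s)).cast : ZMod r × ZMod s).2 = 1 :=
        congrArg (fun z => ((z.2 : (ZMod s)ˣ) : ZMod s)) hu
      rw [Prod.snd_zmod_cast] at h
      exact Units.ext h
    exact ⟨u, by simp [h1, h2, hy]⟩
  · intro l hl hd
    rcases hl.dvd_mul.1 hd with h | h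
    · rw [(Nat.prime_dvd_prime_iff_eq hl hr).1 h]; exact (le_max_right _ _).trans_lt hrB
    · rw [(Nat.prime_dvd_prime_iff_eq hl hs).1 h]; exact (le_max_right _ _).trans_lt hsB
  · intro p hp hpn u hu
    have h1 : ((α u : (ZMod r)ˣ) : ZMod r) = p := by simp [α, ZMod.unitsMap, hu]
    have h2 : ((β u : (ZMod s)ˣ) : ZMod s) = p := by simp [β, ZMod.unitsMap, hu]
    have hv' := congrFun hv ⟨p, by omega⟩
    have i1 : IsUnit (p : ZMod r) := h1 ▸ (α u).isUnit
    have i2 : IsUnit (p : ZMod s) := h2 ▸ (β u).isUnit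
    have e1 : i1.unit = α u := Units.ext h1.symm
    have e2 : i2.unit = β u := Units.ext h2.symm
    simp only [v, dif_pos i1, dif_pos i2, e1, e2] at hv'
    simp [hv']

/-- Good characters with pairwise coprime moduli, obtained by requiring the prime factors of each
modulus to exceed all previous moduli. -/
lemma exists_good_sequence :
    ∃ (N : ℕ → ℕ) (χ : ∀ q, (ZMod (N q))ˣ →* Multiplicative (ZMod (q - 1))),
      (∀ q, 2 ≤ q → IsGoodChar q q (q - 1) (N q) (χ q)) ∧
      ∀ q q', 2 ≤ q → 2 ≤ q' → q ≠ q' → (N q).Coprime (N q') := by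
  have h : ∀ q B : ℕ, ∃ (N : ℕ) (χ : (ZMod N)ˣ →* Multiplicative (ZMod (q - 1))),
      2 ≤ q → IsGoodChar q B (q - 1) N χ := by
    intro q B
    by_cases hq : 2 ≤ q
    · obtain ⟨N, χ, h⟩ := exists_isGoodChar q B (q - 1) (by omega)
      exact ⟨N, χ, fun _ => h⟩
    · exact ⟨1, 1, fun h => absurd h hq⟩
  choose N χ h using h
  -- A bound for all the moduli chosen before step `q`.
  let b : ℕ → ℕ := fun q => Nat.rec 0 (fun q B => B + q + N q (B + q)) q
  have hb : ∀ q, b (q + 1) = b q + q + N q (b q + q) := fun q => rfl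
  have hmono : Monotone b := monotone_nat_of_le_succ fun q => by rw [hb]; omega
  have key : ∀ q q', 2 ≤ q → q < q' → (N q (b q + q)).Coprime (N q' (b q' + q')) := by
    intro q q' hq hlt
    refine Nat.coprime_of_dvd fun l hl h1 h2 => ?_
    have := (h q' (b q' + q') (by omega)).large l hl h2
    have h3 := Nat.le_of_dvd (Nat.pos_of_ne_zero (h q (b q + q) hq).pos) h1
    have h4 := hmono (show q + 1 ≤ q' from hlt)
    rw [hb] at h4
    omega
  refine ⟨fun q => N q (b q + q), fun q => χ q (b q + q), fun q hq => ?_, fun q q' h2 h2' hne => ?_⟩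
  · have := h q (b q + q) hq
    exact ⟨this.surj, this.pos, fun l hl hd => by have := this.large l hl hd; omega, this.triv⟩
  · rcases lt_or_gt_of_ne hne with hlt | hlt
    · exact key _ _ h2 hlt
    · exact (key _ _ h2' hlt).symm

/-! ### Roots of unity over the `p`-adic numbers -/

lemma IsPrimitiveRoot.pow_eq_pow_iff {R : Type*} [CommMonoid R] {ζ : R} {N : ℕ}
    (hζ : IsPrimitiveRoot ζ N) (hN : N ≠ 0) {a b : ℕ} : ζ ^ a = ζ ^ b ↔ a ≡ b [MOD N] := by
  rw [IsOfFinOrder.pow_eq_pow_iff_modEq, ← hζ.eq_orderOf]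
  exact isOfFinOrder_iff_pow_eq_one.2 ⟨N, Nat.pos_of_ne_zero hN, hζ.pow_eq_one⟩

open Polynomial in
/-- Conjugates over `𝔽_p` differ by a power of the Frobenius. -/
lemma exists_eq_pow_of_minpoly {p : ℕ} [Fact p.Prime] {k : Type*} [Field k] [Algebra (ZMod p) k]
    {x y : k} (hx : IsIntegral (ZMod p) x) (hy : aeval y (minpoly (ZMod p) x) = 0) :
    ∃ j : ℕ, y = x ^ p ^ j := by
  let F := IntermediateField.adjoin (ZMod p) {x}
  have : FiniteDimensional (ZMod p) F := IntermediateField.adjoin.finiteDimensional hx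
  have : Finite F := Module.finite_of_finite (ZMod p)
  let φ : F →ₐ[ZMod p] k := (IntermediateField.algHomAdjoinIntegralEquiv (ZMod p) hx).symm
    ⟨y, mem_aroots.2 ⟨minpoly.ne_zero hx, hy⟩⟩
  have hφ : φ (IntermediateField.AdjoinSimple.gen (ZMod p) x) = y :=
    IntermediateField.algHomAdjoinIntegralEquiv_symm_apply_gen _ hx _
  let σ : F ≃ₐ[ZMod p] F := φ.restrictNormal' F
  obtain ⟨j, hj⟩ := (FiniteField.bijective_frobeniusAlgEquivOfAlgebraic_pow (ZMod p) F).2 σ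
  refine ⟨j, ?_⟩
  have h1 := φ.restrictNormal_commutes F (IntermediateField.AdjoinSimple.gen (ZMod p) x)
  have h2 : φ.restrictNormal F (IntermediateField.AdjoinSimple.gen (ZMod p) x)
    = σ (IntermediateField.AdjoinSimple.gen (ZMod p) x) := rfl
  rw [h2, ← hj] at h1
  simp only [AlgEquiv.coe_pow, FiniteField.coe_frobeniusAlgEquivOfAlgebraic_iterate] at h1
  rw [Algebra.algebraMap_self_apply, hφ, ZMod.card] at h1
  rw [← h1]
  simp

open Polynomial in
/-- The unramified action: an automorphism over `ℚ_p` raises a root of unity of order prime to `p`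
to a power of `p`. Indeed `τ` is an isometry, so `τ ζ` and `ζ` have conjugate residues over `𝔽_p`,
and reduction is injective on the roots of unity of order prime to `p`. -/
lemma exists_galois_eq_frobenius_pow {p : ℕ} [Fact p.Prime] {N : ℕ} (hN : N ≠ 0)
    (hpN : ¬ p ∣ N) (τ : PadicAlgCl p ≃ₐ[ℚ_[p]] PadicAlgCl p) {ζ : PadicAlgCl p}
    (hζ : IsPrimitiveRoot ζ N) : ∃ j : ℕ, τ ζ = ζ ^ p ^ j := by
  let O := (PadicAlgCl.valued p).v.valuationSubring
  let k := IsLocalRing.ResidueField O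
  let res : O →+* k := IsLocalRing.residue O
  have hmem : ∀ x : PadicAlgCl p, x ∈ O ↔ ‖x‖ ≤ 1 := fun x => by
    change Valued.v x ≤ 1 ↔ _
    rw [← NNReal.coe_le_coe, PadicAlgCl.valuation_coe]; simp
  have hres : ∀ x : O, res x = 0 ↔ ‖(x : PadicAlgCl p)‖ < 1 := fun x => by
    rw [IsLocalRing.residue_eq_zero_iff, ValuationSubring.valuation_lt_one_iff,
      ← (Valuation.isEquiv_valuation_valuationSubring _).lt_one_iff_lt_one,
      ← NNReal.coe_lt_coe, PadicAlgCl.valuation_coe]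
    simp
  have hiso : ∀ x, ‖τ x‖ = ‖x‖ := fun x => (spectralNorm_eq_of_equiv τ x).symm
  have hζn : ‖ζ‖ = 1 := by
    have := congrArg norm hζ.pow_eq_one
    rw [norm_pow, norm_one] at this
    exact (pow_eq_one_iff_of_nonneg (norm_nonneg _) hN).1 this
  let z : O := ⟨ζ, (hmem _).2 hζn.le⟩
  let w : O := ⟨τ ζ, (hmem _).2 (by rw [hiso, hζn])⟩
  have hz : IsPrimitiveRoot z N := IsPrimitiveRoot.of_map_of_injective (f := O.subtype)
    (by exact hζ) Subtype.val_injective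
  have hp0 : (p : k) = 0 := by
    rw [← map_natCast res, hres]
    have : ‖((p : ℚ_[p]) : PadicAlgCl p)‖ = ‖(p : ℚ_[p])‖ := PadicAlgCl.norm_extends p _
    have h2 : ((p : ℚ_[p]) : PadicAlgCl p) = p := map_natCast _ _
    rw [h2] at this
    have h3 : (((p : O)) : PadicAlgCl p) = p := by simp
    rw [h3, this]
    exact Padic.norm_p_lt_one
  have : CharP k p := (CharP.charP_iff_prime_eq_zero Fact.out).2 hp0
  let _ : Algebra (ZMod p) k := ZMod.algebra k p
  have hNk : NeZero (N : k) := ⟨fun h => hpN ((CharP.cast_eq_zero_iff k p N).1 h)⟩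
  have hzbar : IsPrimitiveRoot (res z) N := by
    rw [← isRoot_cyclotomic_iff, ← map_cyclotomic N res]
    exact (hz.isRoot_cyclotomic (Nat.pos_of_ne_zero hN)).map
  have hint : IsIntegral (ZMod p) (res z) :=
    IsIntegral.of_pow (Nat.pos_of_ne_zero hN) (by rw [hzbar.pow_eq_one]; exact isIntegral_one)
  -- Lift the minimal polynomial of the residue of `ζ` to `ℤ[X]`, where `τ` fixes the coefficients.
  obtain ⟨H, hH⟩ := Polynomial.map_surjective (Int.castRingHom (ZMod p)) ZMod.intCast_surjective
    (minpoly (ZMod p) (res z))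
  have heval : ∀ x : O, aeval (res x) (minpoly (ZMod p) (res z)) = res (aeval x H) := fun x => by
    rw [← hH, aeval_def, eval₂_map, aeval_def, hom_eval₂]
    congr 1
    exact RingHom.ext_int _ _
  have hw : aeval (res w) (minpoly (ZMod p) (res z)) = 0 := by
    have h0 := minpoly.aeval (ZMod p) (res z)
    rw [heval, hres] at h0 ⊢
    have hc : ∀ x : O, ((aeval x H : O) : PadicAlgCl p) = aeval (x : PadicAlgCl p) H := fun x => by
      change O.subtype _ = _
      rw [aeval_def, hom_eval₂, aeval_def]
      congr 1
    rw [hc] at h0 ⊢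
    have : aeval (w : PadicAlgCl p) H = τ (aeval (z : PadicAlgCl p) H) := by
      change _ = (τ : PadicAlgCl p →+* PadicAlgCl p) _
      rw [aeval_def, aeval_def, hom_eval₂]
      congr 1
      exact RingHom.ext_int _ _
    rw [this, hiso]
    exact h0
  obtain ⟨j, hj⟩ := exists_eq_pow_of_minpoly hint hw
  refine ⟨j, ?_⟩
  have hw1 : (τ ζ) ^ N = 1 := by rw [← map_pow, hζ.pow_eq_one, map_one]
  have : NeZero N := ⟨hN⟩
  obtain ⟨a, ha, hwa⟩ := hζ.eq_pow_of_pow_eq_one hw1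
  have hwz : w = z ^ a := Subtype.ext hwa.symm
  rw [hwz, map_pow, hzbar.pow_eq_pow_iff hN] at hj
  rw [← hwa, hζ.pow_eq_pow_iff hN]
  exact hj

/-! ### Galois theory over the rationals -/

/-- The `ℚ`-algebra structure that instance search finds on `AlgebraicClosure ℚ` is the one every field of
characteristic zero carries, which is only propositionally equal to the one of the closure. -/
instance isAlgClosure_rat : IsAlgClosure ℚ (AlgebraicClosure ℚ) := by
  have h : (DivisionRing.toRatAlgebra : Algebra ℚ (AlgebraicClosure ℚ)) =
    AlgebraicClosure.instAlgebra ℚ := Subsingleton.elim _ _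
  rw [h]
  infer_instance

instance isGalois_rat : IsGalois ℚ (AlgebraicClosure ℚ) := IsAlgClosure.isGalois _ _

/-- A continuous surjection from a Galois group onto a Hausdorff group is realised by the fixed field
of its kernel. -/
lemma exists_galois_realisation {k K : Type*} [Field k] [Field K] [Algebra k K] [IsGalois k K]
    {A : Type*} [Group A] [TopologicalSpace A] [T2Space A] (Φ : Gal(K/k) →* A)
    (hc : Continuous Φ) (hs : Function.Surjective Φ) :
    ∃ L : IntermediateField k K, IsGalois k L ∧
      (∃ e : (L ≃ₐ[k] L) ≃* A, Continuous e ∧ Continuous e.symm) ∧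
      ∀ x : K, x ∈ L ↔ ∀ σ : Gal(K/k), Φ σ = 1 → σ x = x := by
  have hcl : IsClosed (Φ.ker : Set Gal(K/k)) := isClosed_singleton.preimage hc
  let H : ClosedSubgroup Gal(K/k) := ⟨Φ.ker, hcl⟩
  have hn : H.1.Normal := Φ.normal_ker
  let L := IntermediateField.fixedField H.1
  have hfix : L.fixingSubgroup = Φ.ker := InfiniteGalois.fixingSubgroup_fixedField H
  have hL : IsGalois k L := (InfiniteGalois.normal_iff_isGalois L).1 (hfix ▸ hn)
  let e : (L ≃ₐ[k] L) ≃* A := (InfiniteGalois.normalAutEquivQuotient H).symm.trans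
    (QuotientGroup.quotientKerEquivOfSurjective Φ hs)
  have he : e ∘ AlgEquiv.restrictNormalHom L = Φ := by
    funext σ
    change e (AlgEquiv.restrictNormalHom L σ) = Φ σ
    rw [← InfiniteGalois.normalAutEquivQuotient_apply H σ]
    simp [e]
    rfl
  have hq : Topology.IsQuotientMap (AlgEquiv.restrictNormalHom L : Gal(K/k) → _) :=
    (InfiniteGalois.restrictNormalHom_continuous L).isClosedMap.isQuotientMap
      (InfiniteGalois.restrictNormalHom_continuous L) (AlgEquiv.restrictNormalHom_surjective K)
  have hec : Continuous e := by
    rw [hq.continuous_iff, he]; exact hc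
  refine ⟨L, hL, ⟨e, hec, ?_⟩, fun x => ?_⟩
  · exact (Continuous.homeoOfEquivCompactToT2 (f := e.toEquiv) hec).symm.continuous
  · rw [IntermediateField.mem_fixedField_iff]
    rfl

/-- A continuous map from a compact space to a product of discrete spaces is onto as soon as every
finite set of coordinates can be prescribed: its image is dense and closed. -/
lemma surjective_of_finite_surjective {G ι : Type*} [TopologicalSpace G] [CompactSpace G]
    {A : ι → Type*} [∀ i, TopologicalSpace (A i)] [∀ i, DiscreteTopology (A i)]
    (Φ : G → ∀ i, A i) (hc : Continuous Φ)
    (h : ∀ (T : Finset ι) (a : ∀ i, A i), ∃ g, ∀ i ∈ T, Φ g i = a i) :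
    Function.Surjective Φ := by
  intro a
  have hd : a ∈ closure (Set.range Φ) := by
    rw [mem_closure_iff_nhds]
    intro U hU
    rw [nhds_pi, Filter.mem_pi] at hU
    obtain ⟨I, hI, t, ht, htU⟩ := hU
    obtain ⟨g, hg⟩ := h hI.toFinset a
    refine ⟨Φ g, htU fun i hi => ?_, g, rfl⟩
    rw [hg i (hI.mem_toFinset.2 hi)]
    exact mem_of_mem_nhds (ht i)
  rwa [(isCompact_range hc).isClosed.closure_eq] at hd

/-- The cyclotomic character modulo `N`, characterised by its action on primitive `N`-th roots of
unity. The second property says that it is continuous for the discrete topology on `(ℤ/N)ˣ`. -/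
lemma exists_cyclotomic_character (N : ℕ) (hN : N ≠ 0) :
    ∃ χ : Gal(AlgebraicClosure ℚ/ℚ) →* (ZMod N)ˣ,
      (∀ σ x (a : ℕ), IsPrimitiveRoot x N → σ x = x ^ a → (χ σ : ZMod N) = a) ∧
      ∀ {A : Type} [Group A] [TopologicalSpace A] (ψ : (ZMod N)ˣ →* A), Continuous (ψ ∘ χ) := by
  have : NeZero N := ⟨hN⟩
  obtain ⟨ζ, hζ⟩ := HasEnoughRootsOfUnity.exists_primitiveRoot (AlgebraicClosure ℚ) N
  have key : ∀ (σ : Gal(AlgebraicClosure ℚ/ℚ)) (a : ℕ), σ ζ = ζ ^ a →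
      (hζ.autToPow ℚ σ : ZMod N) = a := by
    intro σ a h
    rw [← hζ.autToPow_spec ℚ σ, hζ.pow_eq_pow_iff hN, ← ZMod.natCast_eq_natCast_iff] at h
    simpa using h
  refine ⟨hζ.autToPow ℚ, ?_, ?_⟩
  · intro σ x a hx h
    obtain ⟨i, -, rfl⟩ := hx.eq_pow_of_pow_eq_one hζ.pow_eq_one
    refine key σ a ?_
    rw [map_pow, h, ← pow_mul, ← pow_mul, mul_comm]
  · intro A _ _ ψ
    refine IsLocallyConstant.continuous ?_
    rw [IsLocallyConstant.iff_exists_open]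
    intro σ
    -- The character is constant on the left coset `σ Stab(ζ)`, which is open.
    refine ⟨{τ | σ⁻¹ * τ ∈ MulAction.stabilizer Gal(AlgebraicClosure ℚ/ℚ) ζ}, ?_, ?_, ?_⟩
    · exact (stabilizer_isOpen_of_isIntegral ζ).preimage (continuous_const_mul σ⁻¹)
    · simp
    · intro τ hτ
      have h1 : hζ.autToPow ℚ (σ⁻¹ * τ) = 1 := by
        apply Units.ext
        have := key (σ⁻¹ * τ) 1 (by rw [pow_one]; exact hτ)
        simpa using this
      rw [map_mul, map_inv, inv_mul_eq_one] at h1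
      change ψ _ = ψ _
      rw [h1]

/-- Irreducibility of the cyclotomic polynomials: the cyclotomic character is surjective. -/
lemma exists_galois_pow (M : ℕ) (hM : M ≠ 0) {a : ℕ} (ha : a.Coprime M) :
    ∃ σ : Gal(AlgebraicClosure ℚ/ℚ), ∀ x : AlgebraicClosure ℚ, x ^ M = 1 → σ x = x ^ a := by
  have : NeZero M := ⟨hM⟩
  obtain ⟨ζ, hζ⟩ := HasEnoughRootsOfUnity.exists_primitiveRoot (AlgebraicClosure ℚ) M
  have hconj : IsConjRoot ℚ (ζ ^ a) ζ := by
    rw [IsConjRoot, ← Polynomial.cyclotomic_eq_minpoly_rat hζ (Nat.pos_of_ne_zero hM),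
      ← Polynomial.cyclotomic_eq_minpoly_rat (hζ.pow_of_coprime a ha) (Nat.pos_of_ne_zero hM)]
  obtain ⟨σ, hσ⟩ := isConjRoot_iff_exists_algEquiv.1 hconj
  refine ⟨σ, fun x hx => ?_⟩
  obtain ⟨i, -, rfl⟩ := hζ.eq_pow_of_pow_eq_one hx
  rw [map_pow, hσ, ← pow_mul, ← pow_mul, mul_comm]

/-! ### The realisation -/

/-- Restriction of local automorphisms along an embedding of the algebraic closure of `ℚ`. -/
lemma exists_galois_local_global {p : ℕ} [Fact p.Prime]
    (ι : AlgebraicClosure ℚ →+* PadicAlgCl p) (τ : PadicAlgCl p ≃ₐ[ℚ_[p]] PadicAlgCl p) :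
    ∃ σ : Gal(AlgebraicClosure ℚ/ℚ), ∀ x, ι (σ x) = τ (ι x) := by
  let _ : Algebra (AlgebraicClosure ℚ) (PadicAlgCl p) := ι.toAlgebra
  have : IsScalarTower ℚ (AlgebraicClosure ℚ) (PadicAlgCl p) :=
    IsScalarTower.of_algebraMap_eq' (RingHom.ext_rat _ _)
  let τ' : PadicAlgCl p ≃ₐ[ℚ] PadicAlgCl p := τ.restrictScalars ℚ
  exact ⟨τ'.restrictNormal _, fun x => τ'.restrictNormal_commutes _ x⟩

/-- The realisation with bounded local degrees at all primes simultaneously. -/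
lemma exists_realisation_all_primes : ∃ L : IntermediateField ℚ (AlgebraicClosure ℚ),
      IsGalois ℚ L ∧
      (∃ e : (L ≃ₐ[ℚ] L) ≃* (∀ q : mirskySet, Multiplicative (ZMod ((q : ℕ) - 1))),
        Continuous e ∧ Continuous e.symm) ∧
      ∀ p, ∀ hp : p.Prime, HasBoundedLocalDegreesAt p hp L := by
  classical
  obtain ⟨N, ψ, hψ, hcop⟩ := exists_good_sequence
  have hN0 : ∀ q : mirskySet, N q ≠ 0 := fun q => (hψ q q.2.1.two_le).pos
  choose χ hχ hχc using fun q : mirskySet => exists_cyclotomic_character (N q) (hN0 q)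
  let Φ : Gal(AlgebraicClosure ℚ/ℚ) →* (∀ q : mirskySet, Multiplicative (ZMod ((q : ℕ) - 1))) :=
    MonoidHom.pi fun q => (ψ q).comp (χ q)
  have hΦ : ∀ σ q, Φ σ q = ψ q (χ q σ) := fun _ _ => rfl
  have hc : Continuous Φ := continuous_pi fun q => hχc q (ψ q)
  have hs : Function.Surjective Φ := by
    refine surjective_of_finite_surjective _ hc fun T a => ?_
    choose u hu using fun q : mirskySet => (hψ q q.2.1.two_le).surj (a q)
    -- The Chinese remainder theorem gives one exponent with prescribed residues modulo all `N q`
    obtain ⟨c, hc⟩ := Nat.chineseRemainderOfFinset (fun q : mirskySet => (u q : ZMod (N q)).val)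
      (fun q => N q) T (fun q _ => hN0 q)
      (fun q _ q' _ hne => hcop q q' q.2.1.two_le q'.2.1.two_le
        (fun h => hne (Subtype.ext h)))
    have hcu : ∀ q ∈ T, (c : ZMod (N q)) = u q := fun q hq => by
      have : NeZero (N q) := ⟨hN0 q⟩
      rw [(ZMod.natCast_eq_natCast_iff _ _ _).2 (hc q hq), ZMod.natCast_zmod_val]
    have hcM : c.Coprime (∏ q ∈ T, N q) := Nat.Coprime.prod_right fun q hq => by
      rw [← ZMod.isUnit_iff_coprime, hcu q hq]
      exact (u q).isUnit
    obtain ⟨σ, hσ⟩ := exists_galois_pow (∏ q ∈ T, N q)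
      (Finset.prod_ne_zero_iff.2 fun q _ => hN0 q) hcM
    refine ⟨σ, fun q hq => ?_⟩
    have : NeZero (N q) := ⟨hN0 q⟩
    obtain ⟨ζ, hζ⟩ := HasEnoughRootsOfUnity.exists_primitiveRoot (AlgebraicClosure ℚ) (N q)
    have h1 : ζ ^ (∏ q ∈ T, N q) = 1 := by
      obtain ⟨d, hd⟩ := Finset.dvd_prod_of_mem (fun q : mirskySet => N q) hq
      rw [hd, pow_mul, hζ.pow_eq_one, one_pow]
    have h2 : χ q σ = u q := Units.ext ((hχ q σ ζ c hζ (hσ ζ h1)).trans (hcu q hq))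
    rw [hΦ, h2, hu]
  obtain ⟨L, hL, he, hmem⟩ := exists_galois_realisation Φ hc hs
  refine ⟨L, hL, he, fun p hp => ?_⟩
  have : Fact p.Prime := ⟨hp⟩
  let M := ∏ q ∈ (Finset.range p).filter (· ∈ mirskySet), N q
  have hM : M ≠ 0 := Finset.prod_ne_zero_iff.2 fun q hq => hN0 ⟨q, (Finset.mem_filter.1 hq).2⟩
  have : NeZero M := ⟨hM⟩
  obtain ⟨ω, hω⟩ := HasEnoughRootsOfUnity.exists_primitiveRoot (PadicAlgCl p) M
  let E := IntermediateField.adjoin ℚ_[p] {ω}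
  have hE : FiniteDimensional ℚ_[p] E :=
    IntermediateField.adjoin.finiteDimensional (Algebra.IsIntegral.isIntegral ω)
  let ι : AlgebraicClosure ℚ →+* PadicAlgCl p :=
    (IsAlgClosed.lift (R := ℚ) (S := AlgebraicClosure ℚ) (M := PadicAlgCl p)).toRingHom
  have hmap : ∀ x : L, ι x ∈ E := fun x => by
    rw [← InfiniteGalois.fixedField_fixingSubgroup E, IntermediateField.mem_fixedField_iff]
    intro τ hτ
    have hτω : τ ω = ω := (IntermediateField.mem_fixingSubgroup_iff E τ).1 hτ ω
      (IntermediateField.mem_adjoin_simple_self _ _)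
    obtain ⟨σ, hσ⟩ := exists_galois_local_global ι τ
    rw [← hσ, (hmem x).1 x.2 σ]
    funext q
    have : NeZero (N q) := ⟨hN0 q⟩
    have hg := hψ q q.2.1.two_le
    obtain ⟨ζ, hζ⟩ := HasEnoughRootsOfUnity.exists_primitiveRoot (AlgebraicClosure ℚ) (N q)
    have hιζ : IsPrimitiveRoot (ι ζ) (N q) := hζ.map_of_injective ι.injective
    rw [hΦ]
    rcases lt_or_ge (q : ℕ) p with hqp | hpq
    -- Here `N q` divides `M`, so `τ` fixes the roots of unity of order `N q`.
    · obtain ⟨d, hd⟩ : N q ∣ M := Finset.dvd_prod_of_mem N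
        (Finset.mem_filter.2 ⟨Finset.mem_range.2 hqp, q.2⟩)
      obtain ⟨i, -, hi⟩ := hω.eq_pow_of_pow_eq_one (ξ := ι ζ)
        (by rw [hd, pow_mul, hιζ.pow_eq_one, one_pow])
      have h1 : σ ζ = ζ ^ 1 := ι.injective (by rw [hσ, pow_one, ← hi, map_pow, hτω])
      have h2 : χ q σ = 1 := Units.ext ((hχ q σ ζ 1 hζ h1).trans (by simp))
      rw [h2, map_one]
      rfl
    -- Here `τ` acts on the roots of unity of order `N q` through a power of `p`.
    · have hpN : ¬ p ∣ N q := fun h => absurd (hg.large p hp h) (by omega)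
      obtain ⟨j, hj⟩ := exists_galois_eq_frobenius_pow (hN0 q) hpN τ hιζ
      have h1 : σ ζ = ζ ^ p ^ j := ι.injective (by rw [hσ, hj, map_pow])
      have h2 := hχ q σ ζ _ hζ h1
      let u : (ZMod (N q))ˣ := ZMod.unitOfCoprime p ((Nat.Prime.coprime_iff_not_dvd hp).2 hpN)
      have h3 : χ q σ = u ^ j := Units.ext (by rw [h2]; simp [u])
      rw [h3, map_pow, hg.triv p hp hpq u (ZMod.coe_unitOfCoprime _ _), one_pow]
      rfl
  exact ⟨E, inferInstance, inferInstance, hE,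
    ⟨(ι.comp (algebraMap L (AlgebraicClosure ℚ))).codRestrict E.toSubring hmap⟩⟩

/-- Theorem `expl-real`, realisation with bounded local degrees.
Given a set `S` of rational primes, the group `∏_{q ∈ Λ} ℤ/(q-1)ℤ`, where
`Λ = {q prime : q - 1 squarefree}`, admits a realisation over `ℚ` with bounded local
degrees at every prime of `S`. -/
theorem mirsky_product_realisation_bounded
    (S : Set ℕ) (hS : ∀ p ∈ S, p.Prime) :
    ∃ L : IntermediateField ℚ (AlgebraicClosure ℚ),
      IsGalois ℚ L ∧
      (∃ e : (L ≃ₐ[ℚ] L) ≃* (∀ q : mirskySet, Multiplicative (ZMod ((q : ℕ) - 1))),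
        Continuous e ∧ Continuous e.symm) ∧
      ∀ p, ∀ hp : p ∈ S, HasBoundedLocalDegreesAt p (hS p hp) L := by
  obtain ⟨L, hL, he, h⟩ := exists_realisation_all_primes
  exact ⟨L, hL, he, fun p hp => h p (hS p hp)⟩
end

section
/- Let q be a rational prime, F a number field, and T a finite set of rational primes. Then there exists a finite Galois extension L/ℚ with Gal(L/ℚ) cyclic of order q, such that L ∩ F = ℚ (equivalently, L and F are linearly disjoint over ℚ), and every prime p ∈ T splits completely in L/ℚ. -/
/-!
The field `L` is a subfield of a cyclotomic field `K = ℚ(ζₙ)`, cut out by a surjective character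
`χ : (ℤ/n)ˣ → ℤ/q` that is trivial on the classes of all `p ∈ T`.

* Existence of `χ` (`exists_character_trivial_on`). Every prime `l ≡ 1 mod q` carries a surjective
  character `ψ_l : (ℤ/l)ˣ → ℤ/q`. There are infinitely many such `l`, but only finitely many
  possibilities for the tuple `(ψ_l(p))_{p ∈ T}`, so two distinct primes `l, l'` share the same
  tuple; take `n = l l'` and `χ = ψ_l / ψ_l'`. Both primes may be taken prime to any given integer.
* Disjointness from `F` (`cyclotomic_inf_eq_bot`). Choosing `n` prime to `disc F`, the
  discriminant of `K ∩ F` divides the coprime integers `disc K` and `disc F`, so `K ∩ F = ℚ` by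
  Minkowski's theorem.
* Splitting. As `𝓞 K = ℤ[ζₙ]`, the automorphism `σ_p : ζₙ ↦ ζₙ ^ p` satisfies
  `σ_p y ≡ y ^ p mod p 𝓞 K` for every `y` (`dvd_pow_sub_smul`). It fixes `L` because `χ(p) = 1`,
  hence `x ^ p ≡ x mod p 𝓞 L` for every `x ∈ 𝓞 L` (`dvd_pow_sub_self`). Thus `𝓞 L / p` is reduced
  with all residue fields equal to `𝔽_p`, and comparing cardinalities gives `[L : ℚ]` primes
  above `p` (`card_primes_over_eq_finrank`).
-/

open NumberField

/-- If `x ^ p ≡ x` modulo `p` for all integers `x` of `L`, then `p` splits completely in `L`: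
`𝓞 L ⧸ p` is a finite reduced ring of cardinality `p ^ [L : ℚ]`, and it is a product of copies
of `𝔽_p` indexed by the primes above `p`. -/
theorem card_primes_over_eq_finrank {L : Type*} [Field L] [NumberField L] {p : ℕ} (hp : p.Prime)
    (h : ∀ x : 𝓞 L, (p : 𝓞 L) ∣ x ^ p - x) :
    Nat.card {P : Ideal (𝓞 L) // P.IsMaximal ∧ (p : 𝓞 L) ∈ P} = Module.finrank ℚ L := by
  have : Fact p.Prime := ⟨hp⟩
  set I : Ideal (𝓞 L) := Ideal.span {(p : 𝓞 L)} with hI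
  have hI0 : I ≠ ⊥ := by
    simp [hI, hp.ne_zero]
  have hfin : Finite (𝓞 L ⧸ I) := Ideal.finiteQuotientOfFreeOfNeBot I hI0
  have hpow : ∀ x : 𝓞 L ⧸ I, x ^ p = x := by
    intro x
    obtain ⟨x, rfl⟩ := Ideal.Quotient.mk_surjective x
    rw [← map_pow, Ideal.Quotient.eq, hI, Ideal.mem_span_singleton]
    exact h x
  have hred : IsReduced (𝓞 L ⧸ I) := by
    rw [isReduced_iff_pow_one_lt p hp.one_lt]
    intro x hx
    rw [← hpow x, hx]
  -- Each residue field consists of roots of `X ^ p - X`, hence has exactly `p` elements.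
  have hres : ∀ M : MaximalSpectrum (𝓞 L ⧸ I), Nat.card ((𝓞 L ⧸ I) ⧸ M.asIdeal) = p := by
    intro M
    have hM := M.isMaximal
    let _ : Field ((𝓞 L ⧸ I) ⧸ M.asIdeal) := Ideal.Quotient.field _
    have hfM : Finite ((𝓞 L ⧸ I) ⧸ M.asIdeal) :=
      Finite.of_surjective _ Ideal.Quotient.mk_surjective
    have hchar : CharP ((𝓞 L ⧸ I) ⧸ M.asIdeal) p := by
      refine (CharP.charP_iff_prime_eq_zero hp).2 ?_
      have : (p : 𝓞 L ⧸ I) = 0 := by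
        rw [← map_natCast (Ideal.Quotient.mk I), Ideal.Quotient.eq_zero_iff_mem]
        exact Ideal.mem_span_singleton_self _
      rw [← map_natCast (Ideal.Quotient.mk M.asIdeal), this, map_zero]
    have hpow' : ∀ x : (𝓞 L ⧸ I) ⧸ M.asIdeal, x ^ p = x := by
      intro x
      obtain ⟨x, rfl⟩ := Ideal.Quotient.mk_surjective x
      rw [← map_pow, hpow]
    apply le_antisymm
    · have := Fintype.ofFinite ((𝓞 L ⧸ I) ⧸ M.asIdeal)
      have hne := FiniteField.X_pow_card_sub_X_ne_zero ((𝓞 L ⧸ I) ⧸ M.asIdeal) hp.one_lt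
      have hdeg := FiniteField.X_pow_card_sub_X_natDegree_eq ((𝓞 L ⧸ I) ⧸ M.asIdeal) hp.one_lt
      rw [Nat.card_eq_fintype_card, ← hdeg]
      refine Polynomial.card_le_degree_of_subset_roots (Z := Finset.univ) ?_
      intro x _
      rw [Polynomial.mem_roots hne]
      simp [hpow' x]
    · let _ : Algebra (ZMod p) ((𝓞 L ⧸ I) ⧸ M.asIdeal) := ZMod.algebra _ p
      simpa using Nat.card_le_card_of_injective _
        (algebraMap (ZMod p) ((𝓞 L ⧸ I) ⧸ M.asIdeal)).injective
  have : Finite (MaximalSpectrum (𝓞 L ⧸ I)) := inferInstance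
  have := Fintype.ofFinite (MaximalSpectrum (𝓞 L ⧸ I))
  have hcard : p ^ Module.finrank ℚ L = p ^ Nat.card (MaximalSpectrum (𝓞 L ⧸ I)) := by
    rw [← RingOfIntegers.rank, ← Ideal.absNorm_span_natCast, ← hI, Ideal.absNorm_apply,
      Submodule.cardQuot_apply, Nat.card_congr (IsArtinianRing.equivPi (𝓞 L ⧸ I)).toEquiv,
      Nat.card_pi]
    simp [hres]
  rw [Nat.pow_right_injective hp.two_le hcard]
  refine Nat.card_congr ⟨fun P => ⟨P.1.map (Ideal.Quotient.mk I), ?_⟩,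
    fun M => ⟨M.asIdeal.comap (Ideal.Quotient.mk I), ?_, ?_⟩, ?_, ?_⟩
  · have := P.2.1
    refine (Ideal.map_eq_top_or_isMaximal_of_surjective _ Ideal.Quotient.mk_surjective P.2.1).resolve_left ?_
    intro htop
    have h1 := congrArg (Ideal.comap (Ideal.Quotient.mk I)) htop
    rw [Ideal.comap_map_mk (by simpa [hI, Ideal.span_singleton_le_iff_mem] using P.2.2)] at h1
    exact P.2.1.ne_top (by simpa using h1)
  · have := M.isMaximal
    exact Ideal.comap_isMaximal_of_surjective _ Ideal.Quotient.mk_surjective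
  · rw [Ideal.mem_comap, Ideal.Quotient.eq_zero_iff_mem.2 (Ideal.mem_span_singleton_self _)]
    exact zero_mem _
  · intro P
    ext1
    exact Ideal.comap_map_mk (by simpa [hI, Ideal.span_singleton_le_iff_mem] using P.2.2)
  · intro M
    ext1
    exact Ideal.map_comap_of_surjective _ Ideal.Quotient.mk_surjective _

/-- The automorphism `ζₙ ↦ ζₙ ^ p` of `ℚ(ζₙ)` induces the Frobenius on `𝓞 K ⧸ p`: both are ring
homomorphisms on `𝓞 K = ℤ[ζₙ]`, and they agree on `ζₙ`. -/
theorem dvd_pow_sub_smul {n : ℕ} [NeZero n] {K : Type*} [Field K] [NumberField K]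
    [IsCyclotomicExtension {n} ℚ K] {p : ℕ} (hp : p.Prime) (hpn : p.Coprime n) (σ : K ≃ₐ[ℚ] K)
    (hσ : IsCyclotomicExtension.Rat.galEquivZMod n K σ = ZMod.unitOfCoprime p hpn) (x : 𝓞 K) :
    (p : 𝓞 K) ∣ x ^ p - σ • x := by
  have : Fact p.Prime := ⟨hp⟩
  have hζ := IsCyclotomicExtension.zeta_spec n ℚ K
  have hζn : hζ.toInteger ^ n = 1 := hζ.toInteger_isPrimitiveRoot.pow_eq_one
  set I : Ideal (𝓞 K) := Ideal.span {(p : 𝓞 K)} with hI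
  have hI0 : I ≠ ⊤ := by
    intro h
    have h1 := congrArg Ideal.absNorm h
    rw [hI, Ideal.absNorm_span_natCast, Ideal.absNorm_top, Nat.pow_eq_one,
      RingOfIntegers.rank] at h1
    exact h1.elim hp.ne_one Module.finrank_pos.ne'
  have : Nontrivial (𝓞 K ⧸ I) := Ideal.Quotient.nontrivial_iff.2 hI0
  have : CharP (𝓞 K ⧸ I) p := by
    refine (CharP.charP_iff_prime_eq_zero hp).2 ?_
    rw [← map_natCast (Ideal.Quotient.mk I), Ideal.Quotient.eq_zero_iff_mem]
    exact Ideal.mem_span_singleton_self _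
  let f : 𝓞 K →ₐ[ℤ] 𝓞 K ⧸ I := ((frobenius (𝓞 K ⧸ I) p).comp (Ideal.Quotient.mk I)).toIntAlgHom
  let g : 𝓞 K →ₐ[ℤ] 𝓞 K ⧸ I :=
    ((Ideal.Quotient.mk I).comp (MulSemiringAction.toRingHom (K ≃ₐ[ℚ] K) (𝓞 K) σ)).toIntAlgHom
  have hfg : f = g := by
    refine AlgHom.ext_of_adjoin_eq_top
      (IsCyclotomicExtension.Rat.adjoin_singleton_eq_top hζ) ?_
    rintro _ rfl
    change (Ideal.Quotient.mk I hζ.toInteger) ^ p = Ideal.Quotient.mk I (σ • hζ.toInteger)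
    rw [IsCyclotomicExtension.Rat.galEquivZMod_smul_of_pow_eq n K σ hζn, hσ, ← map_pow,
      ZMod.coe_unitOfCoprime, ZMod.val_natCast, ← pow_mod_orderOf _ (p % n),
      ← hζ.toInteger_isPrimitiveRoot.eq_orderOf, Nat.mod_mod]
    conv_lhs => rw [← pow_mod_orderOf, ← hζ.toInteger_isPrimitiveRoot.eq_orderOf]
  have := DFunLike.congr_fun hfg x
  change (Ideal.Quotient.mk I x) ^ p = Ideal.Quotient.mk I (σ • x) at this
  rwa [← map_pow, Ideal.Quotient.eq, hI, Ideal.mem_span_singleton] at this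

/-- If `L` embeds in `ℚ(ζₙ)` and is fixed by `ζₙ ↦ ζₙ ^ p`, then `x ^ p ≡ x` modulo `p` in `𝓞 L`.
The quotient `(x ^ p - x) / p` lies in `L` and is integral because it is so in `ℚ(ζₙ)`. -/
theorem dvd_pow_sub_self {n : ℕ} [NeZero n] {K : Type*} [Field K] [NumberField K]
    [IsCyclotomicExtension {n} ℚ K] {p : ℕ} (hp : p.Prime) (hpn : p.Coprime n) (σ : K ≃ₐ[ℚ] K)
    (hσ : IsCyclotomicExtension.Rat.galEquivZMod n K σ = ZMod.unitOfCoprime p hpn)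
    {L : Type*} [Field L] [NumberField L] (φ : L →+* K) (hφ : ∀ x, σ (φ x) = φ x) (x : 𝓞 L) :
    (p : 𝓞 L) ∣ x ^ p - x := by
  have hp0 : (p : L) ≠ 0 := by exact_mod_cast hp.ne_zero
  obtain ⟨z, hz⟩ := dvd_pow_sub_smul hp hpn σ hσ (RingOfIntegers.mapRingHom φ x)
  have hz' : φ x ^ p - φ x = p * (z : K) := by
    have h1 := congrArg (algebraMap (𝓞 K) K) hz
    have h2 : ((σ • RingOfIntegers.mapRingHom φ x : 𝓞 K) : K) = σ (φ x) := rfl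
    rw [map_sub, map_pow, map_mul, map_natCast] at h1
    rw [hφ] at h2
    exact (congrArg (φ x ^ p - ·) h2).symm.trans h1
  have hw : φ (((x : L) ^ p - x) / p) = z := by
    have : (p : K) ≠ 0 := by exact_mod_cast hp.ne_zero
    rw [map_div₀, map_sub, map_pow, map_natCast, hz', mul_div_cancel_left₀ _ this]
  have hint : IsIntegral ℤ (((x : L) ^ p - x) / p) := by
    have h3 : IsIntegral ℤ (φ (((x : L) ^ p - x) / p)) := hw ▸ RingOfIntegers.isIntegral_coe z
    exact (isIntegral_algHom_iff φ.toIntAlgHom φ.injective).1 h3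
  obtain ⟨w, hw'⟩ : ∃ w : 𝓞 L, algebraMap (𝓞 L) L w = ((x : L) ^ p - x) / p :=
    ⟨⟨_, hint⟩, rfl⟩
  refine ⟨w, FaithfulSMul.algebraMap_injective (𝓞 L) L ?_⟩
  rw [map_mul, map_natCast, hw', mul_div_cancel₀ _ hp0, map_sub, map_pow]

/-- A cyclotomic field of conductor prime to `disc F` meets `F` only in `ℚ`. -/
theorem cyclotomic_inf_eq_bot {Ω : Type*} [Field Ω] [CharZero Ω] {n : ℕ} [NeZero n]
    (K F : IntermediateField ℚ Ω) [IsCyclotomicExtension {n} ℚ K] [NumberField K] [NumberField F]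
    (h : n.Coprime (discr F).natAbs) : K ⊓ F = ⊥ := by
  have : IsGalois ℚ K := IsCyclotomicExtension.isGalois {n} ℚ K
  have hc : IsCoprime (discr K) (discr F) := by
    rw [Int.isCoprime_iff_nat_coprime, IsCyclotomicExtension.Rat.natAbs_discr n K]
    exact Nat.Coprime.coprime_div_left (Nat.Coprime.pow_left _ h)
      (Nat.prod_primeFactors_pow_totient_ediv_dvd (NeZero.pos _))
  have : NumberField ↥(K ⊓ F) := { to_finiteDimensional := inferInstance }
  let _ : Algebra ↥(K ⊓ F) K := (IntermediateField.inclusion inf_le_left).toAlgebra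
  let _ : Algebra ↥(K ⊓ F) F := (IntermediateField.inclusion inf_le_right).toAlgebra
  have hu : IsUnit (discr ↥(K ⊓ F)) :=
    hc.isUnit_of_dvd' (NumberField.discr_dvd_discr _ _) (NumberField.discr_dvd_discr _ _)
  by_contra hne
  rw [← IntermediateField.finrank_eq_one_iff] at hne
  have h1 : 1 < Module.finrank ℚ ↥(K ⊓ F) := by
    have := Module.finrank_pos (R := ℚ) (M := ↥(K ⊓ F))
    lia
  have h2 := abs_discr_gt_two h1
  rw [Int.isUnit_iff_abs_eq.1 hu] at h2
  lia

theorem exists_surjective_character {q l : ℕ} (hl : l.Prime) (h : l ≡ 1 [MOD q]) :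
    ∃ ψ : (ZMod l)ˣ →* Multiplicative (ZMod q), Function.Surjective ψ := by
  have : Fact l.Prime := ⟨hl⟩
  have hd : q ∣ Nat.card (ZMod l)ˣ := by
    rw [Nat.card_eq_fintype_card, ZMod.card_units]
    exact (Nat.modEq_iff_dvd' hl.one_le).1 h.symm
  exact ⟨(ZMod.castHom hd (ZMod q)).toAddMonoidHom.toMultiplicative.comp
      (zmodCyclicMulEquiv (inferInstanceAs (IsCyclic (ZMod l)ˣ))).symm.toMonoidHom,
    (Multiplicative.ofAdd.surjective.comp
      ((ZMod.castHom_surjective hd).comp Multiplicative.toAdd.surjective)).comp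
      (MulEquiv.surjective _)⟩

/-- A surjective character of `(ℤ/n)ˣ` of prime order `q`, trivial on all `p ∈ T`, where `n` is
prime to `d` and to `T`: the quotient of two characters modulo distinct primes `l ≡ 1 mod q`
which take the same values on `T`. -/
theorem exists_character_trivial_on (q : ℕ) (hq : q.Prime) (T : Finset ℕ) (d : ℕ) (hd : d ≠ 0)
    (hT : ∀ p ∈ T, p ≠ 0) :
    ∃ n : ℕ, n ≠ 0 ∧ n.Coprime d ∧ ∃ χ : (ZMod n)ˣ →* Multiplicative (ZMod q),
      Function.Surjective χ ∧ ∀ p ∈ T, ∃ hp : p.Coprime n, χ (ZMod.unitOfCoprime p hp) = 1 := by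
  have : NeZero q := ⟨hq.ne_zero⟩
  have : Finite (Multiplicative (ZMod q)) := inferInstanceAs (Finite (ZMod q))
  set N := d * ∏ p ∈ T, p
  have hN : N ≠ 0 := mul_ne_zero hd (Finset.prod_ne_zero_iff.2 hT)
  set S := {l : ℕ | l.Prime ∧ l ≡ 1 [MOD q]} \ Set.Iic N
  have hS : S.Infinite := (Nat.infinite_setOfPred_prime_modEq_one hq.ne_zero).sdiff
    (Set.finite_Iic N)
  have := hS.to_subtype
  have hcop : ∀ l : S, Nat.Coprime l N := fun l =>
    Nat.coprime_of_lt_prime hN (not_le.1 l.2.2) l.2.1.1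
  have hcopT : ∀ (l : S) (p : T), Nat.Coprime p l := fun l p =>
    ((hcop l).coprime_dvd_right ((Finset.dvd_prod_of_mem _ p.2).mul_left d)).symm
  choose ψ hψ using fun l : S => exists_surjective_character (q := q) l.2.1.1 l.2.1.2
  obtain ⟨l, l', hne, heq⟩ := Finite.exists_ne_map_eq_of_infinite
    (fun (l : S) (p : T) => ψ l (ZMod.unitOfCoprime p (hcopT l p)))
  have hll : Nat.Coprime l l' :=
    (Nat.coprime_primes l.2.1.1 l'.2.1.1).2 fun h => hne (Subtype.ext h)
  refine ⟨l * l', mul_ne_zero l.2.1.1.ne_zero l'.2.1.1.ne_zero,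
    ((hcop l).mul_left (hcop l')).coprime_dvd_right (Dvd.intro _ rfl),
    ((ψ l).comp (ZMod.unitsMap (Dvd.intro _ rfl))) /
      ((ψ l').comp (ZMod.unitsMap (Dvd.intro_left _ rfl))), ?_, ?_⟩
  · intro c
    obtain ⟨a, rfl⟩ := hψ l c
    -- A class congruent to `a` modulo `l` and to `1` modulo `l'` has the same image as `a`.
    obtain ⟨k, hk, hk'⟩ := Nat.chineseRemainder hll (a : ZMod l).val 1
    have : NeZero (l : ℕ) := ⟨l.2.1.1.ne_zero⟩
    rw [← ZMod.natCast_eq_natCast_iff, ZMod.natCast_zmod_val] at hk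
    rw [← ZMod.natCast_eq_natCast_iff, Nat.cast_one] at hk'
    have hkc : k.Coprime (l * l') := by
      refine Nat.Coprime.mul_right ?_ ?_
      · rw [← ZMod.isUnit_iff_coprime, hk]; exact a.isUnit
      · rw [← ZMod.isUnit_iff_coprime, hk']; exact isUnit_one
    refine ⟨ZMod.unitOfCoprime k hkc, ?_⟩
    have h1 : ZMod.unitsMap (Dvd.intro _ rfl : (l : ℕ) ∣ l * l') (ZMod.unitOfCoprime k hkc) = a := by
      ext; simp [ZMod.unitsMap_val, hk]
    have h2 : ZMod.unitsMap (Dvd.intro_left _ rfl : (l' : ℕ) ∣ l * l') (ZMod.unitOfCoprime k hkc)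
        = 1 := by
      ext; simp [ZMod.unitsMap_val, hk']
    simp [h1, h2]
  · intro p hp
    have hpc := hcopT l ⟨p, hp⟩
    have hpc' := hcopT l' ⟨p, hp⟩
    refine ⟨hpc.mul_right hpc', ?_⟩
    have h1 : ZMod.unitsMap (Dvd.intro _ rfl : (l : ℕ) ∣ l * l')
        (ZMod.unitOfCoprime p (hpc.mul_right hpc')) = ZMod.unitOfCoprime p hpc := by
      ext; simp [ZMod.unitsMap_val]
    have h2 : ZMod.unitsMap (Dvd.intro_left _ rfl : (l' : ℕ) ∣ l * l')
        (ZMod.unitOfCoprime p (hpc.mul_right hpc')) = ZMod.unitOfCoprime p hpc' := by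
      ext; simp [ZMod.unitsMap_val]
    have := congrFun heq ⟨p, hp⟩
    simp only [MonoidHom.div_apply, MonoidHom.comp_apply, h1, h2]
    exact div_eq_one.2 this

theorem exists_cyclic_extension_split_completely
    (q : ℕ) (hq : q.Prime)
    (F : IntermediateField ℚ (AlgebraicClosure ℚ)) (hF : FiniteDimensional ℚ F)
    (T : Finset ℕ) (hT : ∀ p ∈ T, p.Prime) :
    ∃ L : IntermediateField ℚ (AlgebraicClosure ℚ),
      FiniteDimensional ℚ L ∧ IsGalois ℚ L ∧
      IsCyclic (L ≃ₐ[ℚ] L) ∧ Nat.card (L ≃ₐ[ℚ] L) = q ∧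
      L ⊓ F = ⊥ ∧
      ∀ p ∈ T,
        Nat.card {P : Ideal (𝓞 L) // P.IsMaximal ∧ (p : 𝓞 L) ∈ P} =
          Module.finrank ℚ L := by
  have : NumberField F := { to_finiteDimensional := hF }
  obtain ⟨n, hn, hnF, χ, hχ, hχT⟩ := exists_character_trivial_on q hq T (discr F).natAbs
    (Int.natAbs_ne_zero.2 (discr_ne_zero F)) fun p hp => (hT p hp).ne_zero
  have : NeZero n := ⟨hn⟩
  obtain ⟨ζ, hζ⟩ := HasEnoughRootsOfUnity.exists_primitiveRoot (AlgebraicClosure ℚ) n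
  let K : IntermediateField ℚ (AlgebraicClosure ℚ) := IntermediateField.adjoin ℚ {ζ}
  have : Algebra.IsAlgebraic ℚ (AlgebraicClosure ℚ) := AlgebraicClosure.isAlgebraic ℚ
  have : IsCyclotomicExtension {n} ℚ K := hζ.intermediateField_adjoin_isCyclotomicExtension ℚ
  have : NumberField K := IsCyclotomicExtension.numberField {n} ℚ K
  have : IsGalois ℚ K := IsCyclotomicExtension.isGalois {n} ℚ K
  let ρ : (K ≃ₐ[ℚ] K) →* Multiplicative (ZMod q) :=
    χ.comp (IsCyclotomicExtension.Rat.galEquivZMod n K).toMonoidHom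
  have hρ : Function.Surjective ρ := hχ.comp (MulEquiv.surjective _)
  let E : IntermediateField ℚ K := IntermediateField.fixedField ρ.ker
  have hE : IsGalois ℚ E := IsGalois.of_fixedField_normal_subgroup ρ.ker
  let e : E ≃ₐ[ℚ] IntermediateField.lift E := IntermediateField.liftAlgEquiv E
  let g : (IntermediateField.lift E ≃ₐ[ℚ] IntermediateField.lift E) ≃* Multiplicative (ZMod q) :=
    (AlgEquiv.autCongr e.symm).trans ((IsGalois.normalAutEquivQuotient ρ.ker).symm.trans
      (QuotientGroup.quotientKerEquivOfSurjective ρ hρ))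
  have hcard : Nat.card (IntermediateField.lift E ≃ₐ[ℚ] IntermediateField.lift E) = q := by
    rw [Nat.card_congr g.toEquiv, Nat.card_congr Multiplicative.toAdd, Nat.card_zmod]
  have : Fact q.Prime := ⟨hq⟩
  have hfin : FiniteDimensional ℚ (IntermediateField.lift E) := e.toLinearEquiv.finiteDimensional
  have : NumberField (IntermediateField.lift E) := { to_finiteDimensional := hfin }
  refine ⟨IntermediateField.lift E, hfin, IsGalois.of_algEquiv e, isCyclic_of_prime_card hcard,
    hcard, ?_, fun p hp => ?_⟩
  · rw [eq_bot_iff, ← cyclotomic_inf_eq_bot K F hnF]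
    exact inf_le_inf_right F (IntermediateField.lift_le E)
  · obtain ⟨hpn, hχp⟩ := hχT p hp
    refine card_primes_over_eq_finrank (hT p hp) fun x => ?_
    let σ := (IsCyclotomicExtension.Rat.galEquivZMod n K).symm (ZMod.unitOfCoprime p hpn)
    have hσ : IsCyclotomicExtension.Rat.galEquivZMod n K σ = ZMod.unitOfCoprime p hpn :=
      MulEquiv.apply_symm_apply _ _
    have hker : σ ∈ ρ.ker := by
      change χ (IsCyclotomicExtension.Rat.galEquivZMod n K σ) = 1
      rw [hσ, hχp]
    refine dvd_pow_sub_self (hT p hp) hpn σ hσ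
      ((algebraMap E K).comp e.symm.toRingEquiv.toRingHom) (fun y => ?_) x
    exact (IntermediateField.mem_fixedField_iff _ _).1 (e.symm y).2 σ hker
end

section
/- Let K be a number field and L/K a Galois extension with L ≠ K. If the Galois group Gal(L/K) is torsion free, i.e. its only element of finite order is the identity, then there exists a rational prime p such that L has unbounded local degrees at p, i.e. there is no ring homomorphism from L into any finite field extension of the p-adic field ℚ_p. -/
section

open Filter Topology NumberField UniqueFactorizationMonoid

/-! ### Euler products over finitely many primes -/

/-- The upper half of an Euler product, for finite sums of a nonnegative multiplicative function `x`:
unique factorization embeds `S` into the terms of the expansion of `∏ (1 + x P + x P ^ 2 + ⋯)`. -/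
lemma sum_le_prod_euler {R : Type*} [CommRing R] [IsDedekindDomain R]
    (x : Ideal R →* ℝ) (hx : ∀ I, 0 ≤ x I) (S T : Finset (Ideal R))
    (hS : ∀ I ∈ S, I ≠ ⊥) (hT : ∀ P ∈ T, x P < 1)
    (hST : ∀ I ∈ S, ∀ P, P.IsPrime → P ≠ ⊥ → P ∣ I → P ∈ T) :
    ∑ I ∈ S, x I ≤ ∏ P ∈ T, (1 - x P)⁻¹ := by
  classical
  let e : Ideal R → T → ℕ := fun I P ↦ (normalizedFactors I).count P.1
  -- a common bound for all exponents, so that finite geometric sums suffice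
  obtain ⟨N, hN⟩ : ∃ N : ℕ, ∀ I ∈ S, ∀ P : T, e I P < N := by
    refine ⟨S.sup (fun I ↦ Finset.univ.sup (e I)) + 1, fun I hI P ↦ Nat.lt_succ_of_le ?_⟩
    exact (Finset.le_sup (f := e I) (Finset.mem_univ P)).trans
      (Finset.le_sup (f := fun I ↦ Finset.univ.sup (e I)) hI)
  have hfac : ∀ I ∈ S, I = ∏ P : T, P.1 ^ e I P := by
    intro I hI
    have hsub : (normalizedFactors I).toFinset ⊆ T := by
      intro P hP
      rw [Multiset.mem_toFinset] at hP
      have hp := prime_of_normalized_factor P hP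
      exact hST I hI P (Ideal.isPrime_of_prime hp) hp.ne_zero (dvd_of_mem_normalizedFactors hP)
    have h1 := Finset.prod_multiset_count_of_subset _ T hsub
    rw [Ideal.prod_normalizedFactors_eq_self (hS I hI)] at h1
    rw [Finset.prod_coe_sort T (fun P ↦ P ^ (normalizedFactors I).count P)]
    exact h1
  have hinj : Set.InjOn e S := by
    intro I hI J hJ h
    rw [hfac I hI, hfac J hJ, h]
  calc ∑ I ∈ S, x I = ∑ I ∈ S, ∏ P : T, x P ^ e I P := by
        refine Finset.sum_congr rfl fun I hI ↦ ?_
        conv_lhs => rw [hfac I hI]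
        simp
    _ = ∑ f ∈ S.image e, ∏ P : T, x P ^ f P :=
        (Finset.sum_image (f := fun f : T → ℕ ↦ ∏ P : T, x P ^ f P) hinj).symm
    _ ≤ ∑ f ∈ Fintype.piFinset (fun _ : T ↦ Finset.range N), ∏ P : T, x P ^ f P := by
        refine Finset.sum_le_sum_of_subset_of_nonneg ?_ fun f _ _ ↦
          Finset.prod_nonneg fun P _ ↦ pow_nonneg (hx _) _
        intro f hf
        obtain ⟨I, hI, rfl⟩ := Finset.mem_image.mp hf
        simpa using fun P hP ↦ hN I hI ⟨P, hP⟩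
    _ = ∏ P : T, ∑ j ∈ Finset.range N, x P ^ j := (Finset.prod_univ_sum _ _).symm
    _ ≤ ∏ P : T, (1 - x P)⁻¹ := by
        refine Finset.prod_le_prod (fun P _ ↦ Finset.sum_nonneg fun j _ ↦ pow_nonneg (hx _) _)
          fun P _ ↦ ?_
        rw [← tsum_geometric_of_lt_one (hx _) (hT _ P.2)]
        exact (summable_geometric_of_lt_one (hx _) (hT _ P.2)).sum_le_tsum _
          fun j _ ↦ pow_nonneg (hx _) _
    _ = ∏ P ∈ T, (1 - x P)⁻¹ := Finset.prod_coe_sort T (fun P ↦ (1 - x P)⁻¹)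

/-- The lower half of an Euler product: expanding `∏ (1 + x P)` gives a sum over squarefree, pairwise
distinct ideals. -/
lemma prod_one_add_eq_sum {R : Type*} [CommRing R] [IsDedekindDomain R]
    (x : Ideal R →* ℝ) (T : Finset (Ideal R)) (hT : ∀ P ∈ T, P.IsPrime ∧ P ≠ ⊥) :
    ∃ S : Finset (Ideal R), (∀ I ∈ S, I ≠ ⊥) ∧ ∏ P ∈ T, (1 + x P) = ∑ I ∈ S, x I := by
  classical
  refine ⟨T.powerset.image (fun U ↦ ∏ P ∈ U, P), ?_, ?_⟩
  · intro I hI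
    obtain ⟨U, hU, rfl⟩ := Finset.mem_image.mp hI
    exact Finset.prod_ne_zero_iff.mpr fun P hP ↦ (hT P (Finset.mem_powerset.mp hU hP)).2
  · rw [Finset.prod_one_add, Finset.sum_image]
    · simp
    · intro U hU V hV h
      have key : ∀ W ∈ T.powerset, normalizedFactors (∏ P ∈ W, P) = W.val := by
        intro W hW
        have hW' := Finset.mem_powerset.mp hW
        have : ∀ P ∈ W.val, Prime P := fun P hP ↦
          (Ideal.prime_iff_isPrime (hT P (hW' hP)).2).mpr (hT P (hW' hP)).1
        have h2 := normalizedFactors_prod_of_prime this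
        rw [← h2]; congr 1; simp
      have h3 := key U hU
      simp only at h
      rw [h, key V hV] at h3
      exact (Finset.val_injective h3).symm

/-! ### Counting ideals and the Dedekind zeta function near `1` -/

lemma isPrime_span_natCast {p : ℕ} (hp : p.Prime) : (Ideal.span {(p : ℤ)}).IsPrime := by
  rw [Ideal.span_singleton_prime (by exact_mod_cast hp.ne_zero)]
  exact Nat.prime_iff_prime_int.mp hp

lemma liesOver_of_natCast_mem {F : Type*} [Field F] {p : ℕ} (hp : p.Prime)
    (P : Ideal (𝓞 F)) [P.IsPrime] (hpP : (p : 𝓞 F) ∈ P) : P.LiesOver (Ideal.span {(p : ℤ)}) := by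
  have hpr := isPrime_span_natCast hp
  refine ⟨(hpr.isMaximal (by simpa using hp.ne_zero)).eq_of_le Ideal.IsPrime.ne_top' ?_⟩
  rw [Ideal.span_le, Set.singleton_subset_iff]
  change algebraMap ℤ (𝓞 F) p ∈ P
  simpa using hpP

lemma ncard_primesOver_le (F : Type*) [Field F] [NumberField F] {p : ℕ} (hp : p.Prime) :
    ((Ideal.span {(p : ℤ)}).primesOver (𝓞 F)).Finite ∧
    ((Ideal.span {(p : ℤ)}).primesOver (𝓞 F)).ncard ≤ Module.finrank ℚ F := by
  have := isPrime_span_natCast hp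
  have hfin : Finite ((Ideal.span {(p : ℤ)}).primesOver (𝓞 F)) :=
    Algebra.QuasiFinite.finite_primesOver _
  refine ⟨hfin, ?_⟩
  have := Fintype.ofFinite ((Ideal.span {(p : ℤ)}).primesOver (𝓞 F))
  rw [← RingOfIntegers.rank F,
    ← Ideal.sum_ramification_inertia_eq_finrank (Ideal.span {(p : ℤ)}) (𝓞 F),
    ← Set.fintypeCard_eq_ncard, ← Finset.card_univ, Finset.card_eq_sum_ones]
  refine Finset.sum_le_sum fun q _ ↦ ?_
  have := q.2.1
  exact Right.one_le_mul (Ideal.ramificationIdx_pos _ ℤ) (Ideal.inertiaDeg_pos _ ℤ)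

/-- The number of ideals of norm `n` in the ring of integers of `F`: the `n`-th coefficient of the
Dedekind zeta function. -/
noncomputable def idealCount (F : Type*) [Field F] [NumberField F] (n : ℕ) : ℕ :=
  Nat.card {I : Ideal (𝓞 F) // Ideal.absNorm I = n}

lemma mem_primesOver_of_absNorm_eq {F : Type*} [Field F] [NumberField F] {p : ℕ} (hp : p.Prime)
    {I : Ideal (𝓞 F)} (hI : Ideal.absNorm I = p) :
    I ∈ (Ideal.span {(p : ℤ)}).primesOver (𝓞 F) := by
  subst hI
  refine ⟨Ideal.isPrime_of_irreducible_absNorm hp, ⟨?_⟩⟩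
  exact Ideal.span_singleton_absNorm hp

/-- An ideal of norm `p` is a prime over `p`, and there are at most `[F : ℚ]` of these. -/
lemma idealCount_prime_le (F : Type*) [Field F] [NumberField F] {p : ℕ} (hp : p.Prime) :
    idealCount F p ≤ Module.finrank ℚ F := by
  obtain ⟨h1, h2⟩ := ncard_primesOver_le F hp
  refine le_trans ?_ h2
  exact Set.ncard_le_ncard (s := {I : Ideal (𝓞 F) | Ideal.absNorm I = p})
    (fun I hI ↦ mem_primesOver_of_absNorm_eq hp hI) h1

/-- The Dedekind zeta function on the real axis. -/
noncomputable def realZeta (F : Type*) [Field F] [NumberField F] (s : ℝ) : ℝ :=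
  ∑' n : ℕ, idealCount F n * (n : ℝ) ^ (-s)

lemma dedekindZeta_eq_realZeta (F : Type*) [Field F] [NumberField F] {s : ℝ} (hs : 1 < s) :
    dedekindZeta F s = (realZeta F s : ℂ) := by
  rw [dedekindZeta, LSeries, realZeta, Complex.ofReal_tsum]
  refine tsum_congr fun n ↦ ?_
  rcases eq_or_ne n 0 with rfl | hn
  · have : (-s) ≠ 0 := by linarith
    simp [Real.zero_rpow this]
  · rw [LSeries.term_of_ne_zero hn, Complex.ofReal_mul, Complex.ofReal_cpow n.cast_nonneg,
      Complex.ofReal_neg, Complex.cpow_neg, div_eq_mul_inv]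
    simp [idealCount]

/-- The analytic class number formula in logarithmic form: `log ζ_F(s) = -log (s - 1) + O(1)` as
`s → 1⁺`. -/
lemma realZeta_near_one (F : Type*) [Field F] [NumberField F] :
    ∃ C : ℝ, ∀ᶠ s : ℝ in 𝓝[>] 1,
      Summable (fun n : ℕ ↦ idealCount F n * (n : ℝ) ^ (-s)) ∧ 0 < realZeta F s ∧
      |Real.log (realZeta F s) + Real.log (s - 1)| ≤ C := by
  have h := tendsto_sub_one_mul_dedekindZeta_nhdsGT F
  have hpos := dedekindZeta_residue_pos F
  have h' : Tendsto (fun s : ℝ ↦ (s - 1) * realZeta F s) (𝓝[>] 1)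
      (𝓝 (dedekindZeta_residue F)) := by
    have h2 := (Complex.continuous_re.tendsto _).comp h
    rw [Complex.ofReal_re] at h2
    refine h2.congr' ?_
    filter_upwards [self_mem_nhdsWithin] with s hs
    rw [Function.comp_apply, dedekindZeta_eq_realZeta F hs, ← Complex.ofReal_one,
      ← Complex.ofReal_sub, ← Complex.ofReal_mul, Complex.ofReal_re]
  have h3 := (h'.log hpos.ne').abs
  refine ⟨|Real.log (dedekindZeta_residue F)| + 1, ?_⟩
  filter_upwards [self_mem_nhdsWithin, h'.eventually (lt_mem_nhds hpos),
    h3.eventually (gt_mem_nhds (lt_add_one _))] with s hs h4 h5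
  have hs : 1 < s := hs
  have hz : 0 < realZeta F s := pos_of_mul_pos_right h4 (by linarith)
  refine ⟨?_, hz, ?_⟩
  · -- a divergent `tsum` would make the zeta value vanish
    by_contra hns
    rw [realZeta, tsum_eq_zero_of_not_summable hns] at hz
    exact lt_irrefl _ hz
  · rw [Real.log_mul (by linarith) hz.ne', add_comm] at h5
    exact h5.le

/-- `I ↦ N(I)^{-s}` as a multiplicative function. -/
noncomputable def normPow (F : Type*) [Field F] [NumberField F] (s : ℝ) : Ideal (𝓞 F) →* ℝ where
  toFun I := (Ideal.absNorm I : ℝ) ^ (-s)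
  map_one' := by simp
  map_mul' I J := by
    rw [map_mul, Nat.cast_mul, Real.mul_rpow (Nat.cast_nonneg _) (Nat.cast_nonneg _)]

lemma normPow_apply (F : Type*) [Field F] [NumberField F] (s : ℝ) (I : Ideal (𝓞 F)) :
    normPow F s I = (Ideal.absNorm I : ℝ) ^ (-s) := rfl

/-- Grouping the ideals by their norm turns a sum over ideals into a Dirichlet sum. -/
lemma sum_normPow_eq (F : Type*) [Field F] [NumberField F] (s : ℝ) (U : Finset ℕ)
    (S : Finset (Ideal (𝓞 F))) (hS : ∀ I, I ∈ S ↔ Ideal.absNorm I ∈ U) :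
    ∑ I ∈ S, normPow F s I = ∑ n ∈ U, idealCount F n * (n : ℝ) ^ (-s) := by
  classical
  rw [← Finset.sum_fiberwise_of_maps_to (t := U) (g := fun I ↦ Ideal.absNorm I)
    fun I hI ↦ (hS I).mp hI]
  refine Finset.sum_congr rfl fun n hn ↦ ?_
  have hc : idealCount F n = (S.filter (fun I ↦ Ideal.absNorm I = n)).card := by
    rw [idealCount, ← Set.ncard_coe_finset]
    change Set.ncard {I : Ideal (𝓞 F) | Ideal.absNorm I = n} = _
    congr 1
    ext I
    simp only [Finset.coe_filter, Set.mem_ofPred_eq, hS]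
    exact ⟨fun h ↦ ⟨h ▸ hn, h⟩, fun h ↦ h.2⟩
  rw [hc, ← nsmul_eq_mul]
  refine Finset.sum_eq_card_nsmul fun I hI ↦ ?_
  rw [normPow_apply, (Finset.mem_filter.mp hI).2]

lemma exists_finset_absNorm (F : Type*) [Field F] [NumberField F] (U : Finset ℕ) :
    ∃ S : Finset (Ideal (𝓞 F)), ∀ I, I ∈ S ↔ Ideal.absNorm I ∈ U := by
  have : {I : Ideal (𝓞 F) | Ideal.absNorm I ∈ U}.Finite := by
    have : {I : Ideal (𝓞 F) | Ideal.absNorm I ∈ U} =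
      ⋃ n ∈ U, {I : Ideal (𝓞 F) | Ideal.absNorm I = n} := by ext; simp
    rw [this]
    exact U.finite_toSet.biUnion fun n _ ↦ Ideal.finite_setOfPred_absNorm_eq n
  exact ⟨this.toFinset, fun I ↦ by simp⟩

lemma sum_normPow_le_realZeta (F : Type*) [Field F] [NumberField F] (s : ℝ)
    (hsum : Summable (fun n : ℕ ↦ idealCount F n * (n : ℝ) ^ (-s)))
    (S : Finset (Ideal (𝓞 F))) : ∑ I ∈ S, normPow F s I ≤ realZeta F s := by
  classical
  obtain ⟨S', hS'⟩ := exists_finset_absNorm F (S.image fun I ↦ Ideal.absNorm I)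
  calc ∑ I ∈ S, normPow F s I ≤ ∑ I ∈ S', normPow F s I :=
        Finset.sum_le_sum_of_subset_of_nonneg
          (fun I hI ↦ (hS' I).mpr (Finset.mem_image_of_mem _ hI))
          fun I _ _ ↦ Real.rpow_nonneg (Nat.cast_nonneg _) _
    _ = _ := sum_normPow_eq F s _ S' hS'
    _ ≤ realZeta F s := hsum.sum_le_tsum _ fun n _ ↦ by positivity

/-! ### Comparison of `log ζ` with the primes of degree one -/

lemma sub_sq_le_log_one_add {x : ℝ} (hx : 0 ≤ x) : x - x ^ 2 ≤ Real.log (1 + x) := by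
  have h := Real.one_sub_inv_le_log_of_pos (show 0 < 1 + x by linarith)
  refine le_trans ?_ h
  have : (1 + x)⁻¹ ≤ 1 - x + x ^ 2 := by
    rw [inv_le_iff_one_le_mul₀ (by linarith)]
    nlinarith [pow_nonneg hx 3]
  linarith

lemma one_sub_inv_le_exp {x : ℝ} (hx : 0 ≤ x) (hx2 : x ≤ 1 / 2) :
    (1 - x)⁻¹ ≤ Real.exp (x + x ^ 2) := by
  rw [inv_le_iff_one_le_mul₀ (by linarith)]
  have h := Real.quadratic_le_exp_of_nonneg (show 0 ≤ x + x ^ 2 by positivity)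
  have : 1 ≤ (1 + (x + x ^ 2) + (x + x ^ 2) ^ 2 / 2) * (1 - x) := by
    have h2 : 0 ≤ x ^ 2 * (1 - 2 * x) := mul_nonneg (sq_nonneg x) (by linarith)
    have h3 : 0 ≤ x ^ 3 * (1 - 2 * x) := mul_nonneg (by positivity) (by linarith)
    have h4 : 0 ≤ x ^ 4 * (1 - 2 * x) := mul_nonneg (by positivity) (by linarith)
    nlinarith
  exact this.trans (mul_le_mul_of_nonneg_right h (by linarith))

/-- The bounded contribution of prime squares: `∑ p⁻²` over the rational primes. -/
lemma summable_primes_inv_sq : Summable (fun p : Nat.Primes ↦ ((p : ℕ) : ℝ) ^ (-2 : ℝ)) :=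
  Nat.Primes.summable_rpow.mpr (by norm_num)

/-- The partial sums of `∑_p a_p p^{-s}`, with `a_p` the number of primes of degree one over `p`,
are bounded by `log ζ_F(s)` up to a constant. -/
lemma sum_le_log_realZeta (F : Type*) [Field F] [NumberField F] {s : ℝ} (hs : 1 < s)
    (hsum : Summable (fun n : ℕ ↦ idealCount F n * (n : ℝ) ^ (-s))) (U : Finset Nat.Primes) :
    ∑ p ∈ U, idealCount F p * ((p : ℕ) : ℝ) ^ (-s) ≤ Real.log (realZeta F s) +
      Module.finrank ℚ F * ∑' p : Nat.Primes, ((p : ℕ) : ℝ) ^ (-2 : ℝ) := by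
  classical
  let V : Finset ℕ := U.map ⟨fun p : Nat.Primes ↦ (p : ℕ), Subtype.val_injective⟩
  have hV : ∀ n ∈ V, n.Prime := by
    intro n hn
    obtain ⟨p, -, rfl⟩ := Finset.mem_map.mp hn
    exact p.2
  obtain ⟨T, hT⟩ := exists_finset_absNorm F V
  have hT' : ∀ P ∈ T, P.IsPrime ∧ P ≠ ⊥ := by
    intro P hP
    have h1 := hV _ ((hT P).mp hP)
    refine ⟨Ideal.isPrime_of_irreducible_absNorm h1, ?_⟩
    rintro rfl
    simp [Nat.not_prime_zero] at h1
  have hnn : ∀ I, 0 ≤ normPow F s I := fun I ↦ Real.rpow_nonneg (Nat.cast_nonneg _) _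
  obtain ⟨S, -, hS⟩ := prod_one_add_eq_sum (normPow F s) T hT'
  have h1 : ∑ P ∈ T, Real.log (1 + normPow F s P) ≤ Real.log (realZeta F s) := by
    rw [← Real.log_prod fun P _ ↦ (by linarith [hnn P] : 1 + normPow F s P ≠ 0), hS]
    refine Real.log_le_log ?_ (sum_normPow_le_realZeta F s hsum S)
    rw [← hS]
    exact Finset.prod_pos fun P _ ↦ by linarith [hnn P]
  have h2 : ∑ P ∈ T, normPow F s P ^ 2 ≤
      Module.finrank ℚ F * ∑' p : Nat.Primes, ((p : ℕ) : ℝ) ^ (-2 : ℝ) := by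
    calc ∑ P ∈ T, normPow F s P ^ 2 ≤ ∑ P ∈ T, normPow F 2 P := by
          refine Finset.sum_le_sum fun P hP ↦ ?_
          have hp := (hV _ ((hT P).mp hP)).one_lt
          rw [normPow_apply, normPow_apply, ← Real.rpow_natCast, ← Real.rpow_mul (Nat.cast_nonneg _)]
          refine Real.rpow_le_rpow_of_exponent_le (by exact_mod_cast hp.le) ?_
          push_cast; linarith
      _ = ∑ n ∈ V, idealCount F n * (n : ℝ) ^ (-2 : ℝ) := sum_normPow_eq F 2 V T hT
      _ ≤ ∑ n ∈ V, Module.finrank ℚ F * (n : ℝ) ^ (-2 : ℝ) := by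
          refine Finset.sum_le_sum fun n hn ↦ ?_
          have := idealCount_prime_le F (hV n hn)
          gcongr
      _ = Module.finrank ℚ F * ∑ p ∈ U, ((p : ℕ) : ℝ) ^ (-2 : ℝ) := by
          rw [← Finset.mul_sum, Finset.sum_map]; rfl
      _ ≤ _ := by
          gcongr
          exact summable_primes_inv_sq.sum_le_tsum _ fun p _ ↦ by positivity
  calc ∑ p ∈ U, idealCount F p * ((p : ℕ) : ℝ) ^ (-s)
      = ∑ n ∈ V, idealCount F n * (n : ℝ) ^ (-s) := by rw [Finset.sum_map]; rfl
    _ = ∑ P ∈ T, normPow F s P := (sum_normPow_eq F s V T hT).symm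
    _ ≤ ∑ P ∈ T, (Real.log (1 + normPow F s P) + normPow F s P ^ 2) :=
        Finset.sum_le_sum fun P _ ↦ by linarith [sub_sq_le_log_one_add (hnn P)]
    _ ≤ _ := by rw [Finset.sum_add_distrib]; linarith

/-- The contribution of the primes over a fixed `p` to `log ζ_F(s)`: primes of degree at least two,
and all squares, contribute `O(p⁻²)`. -/
lemma sum_fiber_le (F : Type*) [Field F] [NumberField F] {s : ℝ} (hs : 1 < s) {p : ℕ}
    (hp : p.Prime) (T : Finset (Ideal (𝓞 F)))
    (hT : ∀ P ∈ T, P ∈ (Ideal.span {(p : ℤ)}).primesOver (𝓞 F)) :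
    ∑ P ∈ T, (normPow F s P + normPow F s P ^ 2) ≤
      idealCount F p * (p : ℝ) ^ (-s) + 2 * Module.finrank ℚ F * (p : ℝ) ^ (-2 : ℝ) := by
  classical
  have hp1 : (1 : ℝ) ≤ p := by exact_mod_cast hp.one_lt.le
  have hterm : ∀ P ∈ T, normPow F s P + normPow F s P ^ 2 ≤
      (if Ideal.absNorm P = p then (p : ℝ) ^ (-s) else 0) + 2 * (p : ℝ) ^ (-2 : ℝ) := by
    intro P hP
    have := (hT P hP).2
    have hf := Ideal.absNorm_eq_pow_inertiaDeg' P hp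
    set f := (Ideal.span {(p : ℤ)}).inertiaDeg' P with hfdef
    have hx : normPow F s P = (p : ℝ) ^ (-s * f) := by
      rw [normPow_apply, hf, Nat.cast_pow, ← Real.rpow_natCast, ← Real.rpow_mul (by linarith),
        mul_comm]
    have hf0 : f ≠ 0 := by
      intro h0
      rw [h0, pow_zero, Ideal.absNorm_eq_one_iff] at hf
      exact (hT P hP).1.ne_top hf
    have hf1 : (1 : ℝ) ≤ f := by exact_mod_cast Nat.one_le_iff_ne_zero.mpr hf0
    have hsq : normPow F s P ^ 2 ≤ (p : ℝ) ^ (-2 : ℝ) := by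
      rw [hx, ← Real.rpow_natCast, ← Real.rpow_mul (by linarith)]
      refine Real.rpow_le_rpow_of_exponent_le hp1 ?_
      push_cast; nlinarith
    split_ifs with h
    · have h5 : normPow F s P = (p : ℝ) ^ (-s) := by rw [normPow_apply, h]
      have : (0 : ℝ) ≤ (p : ℝ) ^ (-2 : ℝ) := by positivity
      linarith
    · have hf2 : (2 : ℝ) ≤ f := by
        have : f ≠ 1 := by rintro h1; rw [h1, pow_one] at hf; exact h hf
        exact_mod_cast (by omega : 2 ≤ f)
      have : normPow F s P ≤ (p : ℝ) ^ (-2 : ℝ) := by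
        rw [hx]
        exact Real.rpow_le_rpow_of_exponent_le hp1 (by nlinarith)
      linarith
  refine (Finset.sum_le_sum hterm).trans ?_
  rw [Finset.sum_add_distrib, ← Finset.sum_filter, Finset.sum_const, Finset.sum_const,
    nsmul_eq_mul, nsmul_eq_mul]
  have hc1 : (T.filter fun P ↦ Ideal.absNorm P = p).card ≤ idealCount F p := by
    rw [← Set.ncard_coe_finset]
    exact Set.ncard_le_ncard (t := {I : Ideal (𝓞 F) | Ideal.absNorm I = p})
      (fun P hP ↦ (Finset.mem_filter.mp hP).2) (Ideal.finite_setOfPred_absNorm_eq p)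
  have hc2 : T.card ≤ Module.finrank ℚ F := by
    refine le_trans ?_ (ncard_primesOver_le F hp).2
    rw [← Set.ncard_coe_finset]
    exact Set.ncard_le_ncard hT (ncard_primesOver_le F hp).1
  rw [show 2 * (Module.finrank ℚ F : ℝ) * (p : ℝ) ^ (-2 : ℝ) =
    Module.finrank ℚ F * (2 * (p : ℝ) ^ (-2 : ℝ)) by ring]
  gcongr

/-- The Euler product bounds `log ζ_F(s)` by `∑_p a_p p^{-s}` up to a constant, with `a_p` the number
of primes of degree one over `p`. -/
lemma log_realZeta_le (F : Type*) [Field F] [NumberField F] {s : ℝ} (hs : 1 < s)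
    (hpos : 0 < realZeta F s)
    (hsum : Summable (fun p : Nat.Primes ↦ idealCount F p * ((p : ℕ) : ℝ) ^ (-s))) :
    Real.log (realZeta F s) ≤ ∑' p : Nat.Primes, idealCount F p * ((p : ℕ) : ℝ) ^ (-s) +
      2 * Module.finrank ℚ F * ∑' p : Nat.Primes, ((p : ℕ) : ℝ) ^ (-2 : ℝ) := by
  classical
  rw [Real.log_le_iff_le_exp hpos, realZeta]
  refine Real.tsum_le_of_sum_range_le (fun n ↦ by positivity) fun X ↦ ?_
  have hnn : ∀ I, 0 ≤ normPow F s I := fun I ↦ Real.rpow_nonneg (Nat.cast_nonneg _) _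
  -- the terms with `n = 0` vanish, so the zero ideal may be left out
  have h0 : ∑ n ∈ Finset.range X, idealCount F n * (n : ℝ) ^ (-s) =
      ∑ n ∈ (Finset.range X).erase 0, idealCount F n * (n : ℝ) ^ (-s) := by
    symm
    refine Finset.sum_erase _ ?_
    rw [Nat.cast_zero, Real.zero_rpow (by linarith), mul_zero]
  obtain ⟨S, hS⟩ := exists_finset_absNorm F ((Finset.range X).erase 0)
  rw [h0, ← sum_normPow_eq F s _ S hS]
  let T := S.filter fun P ↦ P.IsPrime
  have hT : ∀ P ∈ T, P.IsPrime ∧ P ≠ ⊥ := by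
    intro P hP
    obtain ⟨h1, h2⟩ := Finset.mem_filter.mp hP
    refine ⟨h2, ?_⟩
    rintro rfl
    simp [hS] at h1
  have hx : ∀ P ∈ T, normPow F s P ≤ 1 / 2 := by
    intro P hP
    have h1 : Ideal.absNorm P ≠ 0 := by
      rw [Ne, Ideal.absNorm_eq_zero_iff]; exact (hT P hP).2
    have h2 : Ideal.absNorm P ≠ 1 := by
      rw [Ne, Ideal.absNorm_eq_one_iff]; exact (hT P hP).1.ne_top
    have h3 : (2 : ℝ) ≤ Ideal.absNorm P := by exact_mod_cast (by omega : 2 ≤ Ideal.absNorm P)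
    calc normPow F s P ≤ (Ideal.absNorm P : ℝ) ^ (-1 : ℝ) :=
          Real.rpow_le_rpow_of_exponent_le (by linarith) (by linarith)
      _ = (Ideal.absNorm P : ℝ)⁻¹ := Real.rpow_neg_one _
      _ ≤ 1 / 2 := by rw [one_div]; exact inv_anti₀ (by norm_num) h3
  -- the residue characteristic of a prime ideal
  have hchar : ∀ P : Ideal (𝓞 F), ∃ p : Nat.Primes, P ∈ T →
      P ∈ (Ideal.span {((p : ℕ) : ℤ)}).primesOver (𝓞 F) := by
    intro P
    by_cases hP : P ∈ T
    · obtain ⟨hP1, hP2⟩ := hT P hP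
      have := hP1.isMaximal hP2
      obtain ⟨p, n, -, hpP, hp, -⟩ := Ideal.exists_prime_and_absNorm_eq_pow P
      exact ⟨⟨p, hp⟩, fun _ ↦ ⟨hP1, liesOver_of_natCast_mem hp P hpP⟩⟩
    · exact ⟨⟨2, Nat.prime_two⟩, fun h ↦ absurd h hP⟩
  choose χ hχ using hchar
  calc ∑ I ∈ S, normPow F s I ≤ ∏ P ∈ T, (1 - normPow F s P)⁻¹ := by
        refine sum_le_prod_euler (normPow F s) hnn S T ?_ (fun P hP ↦ by linarith [hx P hP]) ?_
        · rintro I hI rfl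
          simp [hS] at hI
        · intro I hI P hP hP0 hPI
          refine Finset.mem_filter.mpr ⟨(hS P).mpr ?_, hP⟩
          obtain ⟨hI0, hIX⟩ := Finset.mem_erase.mp ((hS I).mp hI)
          refine Finset.mem_erase.mpr ⟨by rwa [Ne, Ideal.absNorm_eq_zero_iff], ?_⟩
          exact Finset.mem_range.mpr ((Nat.le_of_dvd (Nat.pos_of_ne_zero hI0)
            (map_dvd Ideal.absNorm hPI)).trans_lt (Finset.mem_range.mp hIX))
    _ ≤ ∏ P ∈ T, Real.exp (normPow F s P + normPow F s P ^ 2) := by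
        refine Finset.prod_le_prod (fun P hP ↦ inv_nonneg.mpr (by linarith [hx P hP]))
          fun P hP ↦ one_sub_inv_le_exp (hnn P) (hx P hP)
    _ = Real.exp (∑ P ∈ T, (normPow F s P + normPow F s P ^ 2)) := (Real.exp_sum _ _).symm
    _ ≤ _ := Real.exp_le_exp.mpr ?_
  calc ∑ P ∈ T, (normPow F s P + normPow F s P ^ 2)
      = ∑ p ∈ T.image χ, ∑ P ∈ T with χ P = p, (normPow F s P + normPow F s P ^ 2) :=
        (Finset.sum_fiberwise_of_maps_to (fun P hP ↦ Finset.mem_image_of_mem _ hP) _).symm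
    _ ≤ ∑ p ∈ T.image χ, (idealCount F p * ((p : ℕ) : ℝ) ^ (-s) +
          2 * Module.finrank ℚ F * ((p : ℕ) : ℝ) ^ (-2 : ℝ)) := by
        refine Finset.sum_le_sum fun p _ ↦ sum_fiber_le F hs p.2 _ fun P hP ↦ ?_
        obtain ⟨h1, rfl⟩ := Finset.mem_filter.mp hP
        exact hχ P h1
    _ ≤ _ := by
        rw [Finset.sum_add_distrib, ← Finset.mul_sum]
        gcongr
        · exact hsum.sum_le_tsum _ fun p _ ↦ by positivity
        · exact summable_primes_inv_sq.sum_le_tsum _ fun p _ ↦ by positivity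

/-- For both fields `∑_p a_p p^{-s}` grows like `-log (s - 1)` as `s → 1⁺`, so an inequality
between multiples of the coefficients `a_p` forces the same inequality between the multipliers. -/
lemma le_of_idealCount_le (M F : Type*) [Field M] [NumberField M] [Field F] [NumberField F]
    (n d : ℕ) (h : ∀ p : ℕ, p.Prime → n * idealCount M p ≤ d * idealCount F p) : n ≤ d := by
  obtain ⟨C₁, h₁⟩ := realZeta_near_one M
  obtain ⟨C₂, h₂⟩ := realZeta_near_one F
  by_contra! hlt
  have hlog : Tendsto (fun s : ℝ ↦ -Real.log (s - 1)) (𝓝[>] 1) atTop := by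
    have : Tendsto (fun s : ℝ ↦ s - 1) (𝓝[>] 1) (𝓝[>] 0) := by
      refine tendsto_nhdsWithin_iff.mpr ⟨?_, ?_⟩
      · have : Tendsto (fun s : ℝ ↦ s - 1) (𝓝 1) (𝓝 (1 - 1)) :=
          tendsto_id.sub tendsto_const_nhds
        rw [sub_self] at this
        exact this.mono_left nhdsWithin_le_nhds
      · filter_upwards [self_mem_nhdsWithin] with s hs
        exact sub_pos.mpr (show 1 < s from hs)
    exact tendsto_neg_atBot_atTop.comp (Real.tendsto_log_nhdsGT_zero.comp this)
  set B : ℝ := ∑' p : Nat.Primes, ((p : ℕ) : ℝ) ^ (-2 : ℝ)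
  set X : ℝ := n * (C₁ + 2 * Module.finrank ℚ M * B) + d * (C₂ + Module.finrank ℚ F * B)
  obtain ⟨s, hs, ⟨a1, a2, a3⟩, ⟨b1, -, b3⟩, hsX⟩ :=
    ((eventually_mem_nhdsWithin (a := (1 : ℝ)) (s := Set.Ioi 1)).and
      (h₁.and (h₂.and (hlog.eventually_gt_atTop X)))).exists
  have hs : 1 < s := hs
  have hsumM : Summable (fun p : Nat.Primes ↦ idealCount M p * ((p : ℕ) : ℝ) ^ (-s)) :=
    a1.comp_injective Subtype.val_injective
  have hsumF : Summable (fun p : Nat.Primes ↦ idealCount F p * ((p : ℕ) : ℝ) ^ (-s)) :=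
    b1.comp_injective Subtype.val_injective
  have e1 := log_realZeta_le M hs a2 hsumM
  have e2 := hsumF.tsum_le_of_sum_le (sum_le_log_realZeta F hs b1)
  have e3 : n * ∑' p : Nat.Primes, idealCount M p * ((p : ℕ) : ℝ) ^ (-s) ≤
      d * ∑' p : Nat.Primes, idealCount F p * ((p : ℕ) : ℝ) ^ (-s) := by
    rw [← tsum_mul_left, ← tsum_mul_left]
    refine (hsumM.mul_left _).tsum_le_tsum (fun p ↦ ?_) (hsumF.mul_left _)
    rw [← mul_assoc, ← mul_assoc]
    have : (n * idealCount M p : ℝ) ≤ d * idealCount F p := by exact_mod_cast h p p.2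
    gcongr
  have a4 := abs_le.mp a3
  have b4 := abs_le.mp b3
  set ℓ := Real.log (s - 1)
  have f1 : (n : ℝ) * (-ℓ - C₁ - 2 * Module.finrank ℚ M * B) ≤
      n * ∑' p : Nat.Primes, idealCount M p * ((p : ℕ) : ℝ) ^ (-s) := by
    gcongr; linarith
  have f2 : (d : ℝ) * ∑' p : Nat.Primes, idealCount F p * ((p : ℕ) : ℝ) ^ (-s) ≤
      d * (-ℓ + C₂ + Module.finrank ℚ F * B) := by
    gcongr; linarith
  have hX0 : 0 ≤ X := by
    have : 0 ≤ C₁ := (abs_nonneg _).trans a3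
    have : 0 ≤ C₂ := (abs_nonneg _).trans b3
    have : 0 ≤ B := tsum_nonneg fun p ↦ by positivity
    positivity
  have hnd : (1 : ℝ) ≤ n - d := by
    have : (d : ℝ) + 1 ≤ n := by exact_mod_cast hlt
    linarith
  have : -ℓ ≤ (n - d) * -ℓ := le_mul_of_one_le_left (by linarith) hnd
  have hXdef : X = n * (C₁ + 2 * Module.finrank ℚ M * B) + d * (C₂ + Module.finrank ℚ F * B) := rfl
  linarith [f1.trans (e3.trans f2)]

/-! ### Finiteness of decomposition groups -/

lemma norm_le_one_of_isIntegral {E : Type*} [NormedField E] [IsUltrametricDist E] {x : E}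
    (hx : IsIntegral ℤ x) : ‖x‖ ≤ 1 := by
  have h1 : IsIntegral (NormedField.valuation (K := E)).valuationSubring x := hx.tower_top
  obtain ⟨y, rfl⟩ := IsIntegrallyClosed.algebraMap_eq_of_integral h1
  exact_mod_cast (Valuation.mem_valuationSubring_iff _ _).mp y.2

/-- An approximation argument combined with Dedekind's independence of characters: if `E` is finite
over `ℚ_p`, then only finitely many embeddings `ψ : L →+* E` satisfy `‖ψ x‖ ≤ 1` whenever
`‖φ x‖ ≤ 1`, for a given embedding `φ`. -/
lemma finite_embeddings_of_norm_le_one {p : ℕ} [Fact p.Prime] {L E : Type*} [Field L]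
    [NormedField E] [NormedAlgebra ℚ_[p] E] [FiniteDimensional ℚ_[p] E]
    (φ : L →+* E) : {ψ : L →+* E | ∀ x, ‖φ x‖ ≤ 1 → ‖ψ x‖ ≤ 1}.Finite := by
  classical
  by_contra hinf
  obtain ⟨t, hts, htc⟩ := Set.Infinite.exists_subset_card_eq hinf
    (Module.finrank ℚ_[p] E + 1)
  obtain ⟨b, hb, hspan, hli⟩ := exists_linearIndependent ℚ_[p] (Set.range φ)
  have hbfin : Finite b := hli.finite
  have := Fintype.ofFinite b
  choose x hx using fun i : b ↦ hb i.2
  have hcard : Module.finrank E (b → E) < Fintype.card t := by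
    rw [Module.finrank_fintype_fun_eq_card, Fintype.card_coe, htc]
    exact Nat.lt_succ_of_le hli.fintype_card_le_finrank
  -- a linear relation between the `ψ ∈ t` on the elements `x i`
  obtain ⟨c, hc, j₀, hj₀⟩ : ∃ c : t → E, ∑ j, c j • (fun i : b ↦ j.1 (x i)) = 0 ∧
      ∃ j, c j ≠ 0 := by
    rw [← Fintype.not_linearIndependent_iff]
    intro h
    exact absurd h.fintype_card_le_finrank hcard.not_ge
  have hc' : ∀ i, ∑ j, c j * j.1 (x i) = 0 := by
    intro i
    simpa using congrFun hc i
  have hp0 : (p : ℝ)⁻¹ < 1 := inv_lt_one_of_one_lt₀ (by exact_mod_cast (Fact.out : p.Prime).one_lt)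
  have hp1 : (0 : ℝ) < (p : ℝ)⁻¹ :=
    inv_pos.mpr (by exact_mod_cast (Fact.out : p.Prime).pos)
  have hpE : ‖(p : E)‖ = (p : ℝ)⁻¹ := by
    rw [← map_natCast (algebraMap ℚ_[p] E), norm_algebraMap', Padic.norm_p]
  have hpE0 : (p : E) ≠ 0 := by
    rw [← norm_ne_zero_iff, hpE]; exact hp1.ne'
  have hpL0 : (p : L) ≠ 0 := by
    intro h
    apply hpE0
    rw [← map_natCast φ, h, map_zero]
  have hE0 : CharZero E := charZero_of_injective_algebraMap (algebraMap ℚ_[p] E).injective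
  have hL0 : CharZero L := by
    refine ⟨fun m n h ↦ ?_⟩
    have := congrArg φ h
    simpa using this
  -- The relation extends to all of `L`: approximate `y` by a rational combination of the `x i` up to
  -- an error `z` with `‖φ z‖ ≤ p ^ (-k)`; then `‖ψ z‖ ≤ p ^ (-k)` for every `ψ ∈ t`.
  have hall : ∀ y : L, ∑ j, c j * j.1 y = 0 := by
    intro y
    have hy : φ y ∈ Submodule.span ℚ_[p] (Set.range fun i : b ↦ φ (x i)) := by
      have : (Set.range fun i : b ↦ φ (x i)) = b := by
        simp [hx]
      rw [this, hspan]
      exact Submodule.subset_span ⟨y, rfl⟩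
    obtain ⟨a, ha⟩ := (Submodule.mem_span_range_iff_exists_fun _).mp hy
    -- the summand `1` only serves to make `A` positive
    set A : ℝ := 1 + ∑ i, ‖φ (x i)‖ with hA
    have hApos : 0 < A := by positivity
    have hbound : ∀ k : ℕ, ‖∑ j, c j * j.1 y‖ ≤ (∑ j, ‖c j‖) * (p : ℝ)⁻¹ ^ k := by
      intro k
      choose r hr using fun i : b ↦ Padic.rat_dense (p := p) (a i)
        (div_pos (pow_pos hp1 k) hApos)
      set z : L := y - ∑ i, (r i : L) * x i with hz
      have hφz : ‖φ z‖ ≤ (p : ℝ)⁻¹ ^ k := by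
        have e : φ z = ∑ i, (a i - (r i : ℚ_[p])) • φ (x i) := by
          simp only [hz, map_sub, map_sum, map_mul, map_ratCast, sub_smul,
            Finset.sum_sub_distrib, ha]
          simp [Algebra.smul_def]
        rw [e]
        refine (norm_sum_le _ _).trans ?_
        calc ∑ i, ‖(a i - (r i : ℚ_[p])) • φ (x i)‖
            ≤ ∑ i, (p : ℝ)⁻¹ ^ k / A * ‖φ (x i)‖ := by
              refine Finset.sum_le_sum fun i _ ↦ ?_
              rw [norm_smul]
              have := (hr i).le
              gcongr
          _ = (p : ℝ)⁻¹ ^ k / A * (A - 1) := by rw [← Finset.mul_sum, hA]; ring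
          _ ≤ (p : ℝ)⁻¹ ^ k / A * A := by gcongr; linarith
          _ = _ := div_mul_cancel₀ _ hApos.ne'
      have hψz : ∀ j : t, ‖j.1 z‖ ≤ (p : ℝ)⁻¹ ^ k := by
        intro j
        have h1 := hts j.2 (z / (p : L) ^ k) (by
          rw [map_div₀, map_pow, map_natCast, norm_div, norm_pow, hpE]
          exact div_le_one_of_le₀ hφz (by positivity))
        rw [map_div₀, map_pow, map_natCast, norm_div, norm_pow, hpE] at h1
        rwa [div_le_one₀ (by positivity)] at h1
      have e : ∑ j, c j * j.1 y = ∑ j, c j * j.1 z := by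
        simp only [hz, map_sub, map_sum, map_mul, map_ratCast, mul_sub, Finset.sum_sub_distrib,
          Finset.mul_sum]
        rw [Finset.sum_comm]
        have : ∀ i : b, ∑ j : t, c j * ((r i : E) * j.1 (x i)) = 0 := by
          intro i
          have := congrArg (fun u ↦ (r i : E) * u) (hc' i)
          rw [mul_zero, Finset.mul_sum] at this
          rw [← this]
          exact Finset.sum_congr rfl fun j _ ↦ by ring
        rw [Finset.sum_eq_zero fun i _ ↦ this i, sub_zero]
      rw [e, Finset.sum_mul]
      refine (norm_sum_le _ _).trans (Finset.sum_le_sum fun j _ ↦ ?_)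
      rw [norm_mul]
      exact mul_le_mul_of_nonneg_left (hψz j) (norm_nonneg _)
    have hlim : Tendsto (fun k : ℕ ↦ (∑ j, ‖c j‖) * (p : ℝ)⁻¹ ^ k) atTop (𝓝 0) := by
      simpa using (tendsto_pow_atTop_nhds_zero_of_lt_one hp1.le hp0).const_mul (∑ j, ‖c j‖)
    exact norm_le_zero_iff.mp (ge_of_tendsto' hlim hbound)
  -- which contradicts the independence of characters
  have hind := (linearIndependent_monoidHom L E).comp
    (fun j : t ↦ ((j.1 : L →+* E) : L →* E)) (fun i j h ↦ by
      ext u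
      exact DFunLike.congr_fun h u)
  exact hj₀ (Fintype.linearIndependent_iff.mp hind c (by
    ext u
    simpa using hall u) j₀)

/-- The localization of the ring of all integers of an algebraic extension of `ℚ` at a prime above
`p` is a valuation ring: each `x` is a fraction `t / s` with `s ∉ Q` or with `t ∉ Q`. -/
lemma exists_mul_eq_or {L : Type*} [Field L] [CharZero L] [Algebra.IsAlgebraic ℚ L]
    (Q : Ideal (𝓞 L)) [Q.IsPrime] {p : ℕ} (hp : p ≠ 0) (hpQ : (p : 𝓞 L) ∈ Q) (x : L) :
    ∃ s t : 𝓞 L, (s ∉ Q ∧ (s : L) * x = t) ∨ (t ∉ Q ∧ (s : L) * x = t) := by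
  let F := IntermediateField.adjoin ℚ {x}
  have : FiniteDimensional ℚ F :=
    IntermediateField.adjoin.finiteDimensional (Algebra.IsIntegral.isIntegral x)
  have : NumberField F := ⟨⟩
  let f : 𝓞 F →+* 𝓞 L := algebraMap (𝓞 F) (𝓞 L)
  let P : Ideal (𝓞 F) := Q.comap f
  have hP : P ≠ ⊥ := by
    intro h
    have : (p : 𝓞 F) ∈ P := by simpa [P, Ideal.mem_comap] using hpQ
    rw [h, Ideal.mem_bot] at this
    exact hp (by exact_mod_cast this)
  have : IsDiscreteValuationRing (Localization.AtPrime P) :=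
    IsLocalization.AtPrime.isDiscreteValuationRing_of_dedekind_domain _ hP _
  obtain ⟨a, b, hb, hab⟩ := IsFractionRing.div_surjective (A := 𝓞 F)
    (⟨x, IntermediateField.mem_adjoin_simple_self ℚ x⟩ : F)
  have hb0 : b ≠ 0 := nonZeroDivisors.ne_zero hb
  have hbL : ((f b : 𝓞 L) : L) ≠ 0 := by
    have : ((f b : 𝓞 L) : L) = algebraMap F L (b : F) := rfl
    rw [this]
    simpa using hb0
  have habL : x * (f b : L) = (f a : L) := by
    have h1 : algebraMap (𝓞 F) F a = ⟨x, IntermediateField.mem_adjoin_simple_self ℚ x⟩ *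
        algebraMap (𝓞 F) F b := by
      rw [← hab]
      exact (div_mul_cancel₀ _ (by simpa using hb0)).symm
    exact (congrArg (algebraMap F L) h1).symm
  -- divisibility in the localization at `P` yields an identity in `𝓞 F`
  have hdvd : ∀ u v : 𝓞 F, algebraMap _ (Localization.AtPrime P) u ∣ algebraMap _ _ v →
      ∃ s c : 𝓞 F, s ∉ P ∧ s * v = c * u := by
    rintro u v ⟨w, hw⟩
    obtain ⟨⟨c, s⟩, hcs⟩ := IsLocalization.surj P.primeCompl w
    refine ⟨s, c, s.2, ?_⟩
    apply IsLocalization.injective (Localization.AtPrime P) P.primeCompl_le_nonZeroDivisors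
    rw [map_mul, map_mul, hw, ← hcs]
    ring
  have hcast : ∀ u v : 𝓞 F, ((f (u * v) : 𝓞 L) : L) = (f u : L) * (f v : L) := by
    intro u v; simp
  rcases ValuationRing.dvd_total (algebraMap _ (Localization.AtPrime P) b)
    (algebraMap _ (Localization.AtPrime P) a) with h | h
  · obtain ⟨s, c, hs, he⟩ := hdvd b a h
    refine ⟨f s, f c, Or.inl ⟨hs, ?_⟩⟩
    apply mul_right_cancel₀ hbL
    rw [mul_assoc, habL, ← hcast, ← hcast, he]
  · obtain ⟨s, c, hs, he⟩ := hdvd a b h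
    refine ⟨f c, f s, Or.inr ⟨hs, ?_⟩⟩
    apply mul_right_cancel₀ hbL
    rw [mul_assoc, habL, ← hcast, ← hcast, he]

open scoped Pointwise in
/-- Bounded local degrees at `p` produce a prime of `L` over `p` with trivial decomposition group:
an embedding `φ` into a finite extension of `ℚ_p` defines a prime `Q`, composition with `φ` embeds the
decomposition group of `Q` into a finite set of embeddings, and torsion freeness kills finite groups. -/
lemma exists_prime_stabilizer_trivial {p : ℕ} (hp : p.Prime) {K L : Type*} [Field K] [Field L]
    [CharZero L] [Algebra.IsAlgebraic ℚ L] [Algebra K L]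
    (htf : ∀ σ : L ≃ₐ[K] L, IsOfFinOrder σ → σ = 1) (h : HasBoundedLocalDegreesAt p hp L) :
    ∃ Q : Ideal (𝓞 L), Q.IsPrime ∧ (p : 𝓞 L) ∈ Q ∧ ∀ σ : L ≃ₐ[K] L, σ • Q = Q → σ = 1 := by
  have : Fact p.Prime := ⟨hp⟩
  obtain ⟨E, _, _, _, ⟨φ⟩⟩ := h
  let _ := spectralNorm.normedField ℚ_[p] E
  let _ := spectralNorm.normedAlgebra ℚ_[p] E
  have : IsUltrametricDist E :=
    IsUltrametricDist.isUltrametricDist_of_isNonarchimedean_norm isNonarchimedean_spectralNorm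
  have hfin := finite_embeddings_of_norm_le_one (p := p) φ
  have hinteg : ∀ x : 𝓞 L, ‖φ x‖ ≤ 1 := fun x ↦
    norm_le_one_of_isIntegral (map_isIntegral_int φ x.isIntegral_coe)
  let Q : Ideal (𝓞 L) :=
    { carrier := {x | ‖φ x‖ < 1}
      add_mem' := fun {x y} hx hy ↦ by
        have := IsUltrametricDist.norm_add_le_max (φ x) (φ y)
        simpa using this.trans_lt (max_lt hx hy)
      zero_mem' := by simp
      smul_mem' := fun c x hx ↦ by
        simp only [smul_eq_mul, Set.mem_ofPred_eq, map_mul, norm_mul] at hx ⊢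
        exact (mul_le_of_le_one_left (norm_nonneg _) (hinteg c)).trans_lt hx }
  have hQ : ∀ x : 𝓞 L, x ∈ Q ↔ ‖φ x‖ < 1 := fun x ↦ Iff.rfl
  have hQ1 : ∀ x : 𝓞 L, x ∉ Q ↔ ‖φ x‖ = 1 := fun x ↦ by
    rw [hQ, not_lt]
    exact ⟨fun h ↦ le_antisymm (hinteg x) h, fun h ↦ h.ge⟩
  have hprime : Q.IsPrime := by
    refine ⟨?_, fun {x y} hxy ↦ ?_⟩
    · rw [Ne, Ideal.eq_top_iff_one, hQ]; simp
    · by_contra! hc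
      rw [hQ1, hQ1] at hc
      rw [hQ] at hxy
      simp [hc.1, hc.2] at hxy
  have hpQ : (p : 𝓞 L) ∈ Q := by
    rw [hQ]
    have : φ ((p : 𝓞 L) : L) = algebraMap ℚ_[p] E p := by simp
    rw [this, norm_algebraMap', Padic.norm_p]
    exact inv_lt_one_of_one_lt₀ (by exact_mod_cast hp.one_lt)
  -- an element of the decomposition group maps the valuation ring of `φ` to itself
  have hball : ∀ σ : L ≃ₐ[K] L, σ • Q = Q → ∀ x, ‖φ x‖ ≤ 1 → ‖φ (σ x)‖ ≤ 1 := by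
    intro σ hσ x hx
    have hmem : ∀ s : 𝓞 L, s ∉ Q → σ • s ∉ Q := by
      intro s hs hs'
      rw [← hσ, Ideal.smul_mem_pointwise_smul_iff] at hs'
      exact hs hs'
    obtain ⟨s, t, hst⟩ := exists_mul_eq_or Q hp.ne_zero hpQ x
    have hs : s ∉ Q ∧ (s : L) * x = t := by
      rcases hst with h | ⟨h1, h2⟩
      · exact h
      · refine ⟨?_, h2⟩
        rw [hQ1] at h1 ⊢
        have h3 := congrArg (fun u ↦ ‖φ u‖) h2
        simp only [map_mul, norm_mul, h1] at h3
        refine le_antisymm (hinteg s) ?_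
        rw [← h3]
        exact mul_le_of_le_one_right (norm_nonneg _) hx
    have h4 : ((σ • s : 𝓞 L) : L) * σ x = ((σ • t : 𝓞 L) : L) := by
      change σ s * σ x = σ t
      rw [← map_mul, hs.2]
    have h5 := congrArg (fun u ↦ ‖φ u‖) h4
    simp only [map_mul, norm_mul] at h5
    rw [(hQ1 _).mp (hmem s hs.1), one_mul] at h5
    rw [h5]
    exact hinteg _
  have hD : (MulAction.stabilizer (L ≃ₐ[K] L) Q : Set (L ≃ₐ[K] L)).Finite := by
    refine Set.Finite.of_finite_image (f := fun σ ↦ φ.comp (σ : L →+* L))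
      (hfin.subset ?_) ?_
    · rintro _ ⟨σ, hσ, rfl⟩ x hx
      exact hball σ hσ x hx
    · intro σ _ τ _ hστ
      ext x
      exact φ.injective (DFunLike.congr_fun hστ x)
  refine ⟨Q, hprime, hpQ, fun σ hσ ↦ htf σ ?_⟩
  have := hD.to_subtype
  have h6 := isOfFinOrder_of_finite (⟨σ, hσ⟩ : MulAction.stabilizer (L ≃ₐ[K] L) Q)
  exact (Subgroup.subtype _).isOfFinOrder h6

/-! ### Descent of trivial decomposition groups to finite subextensions -/

/-- The Galois group of `L / F` acts on the integers of `L` with invariants the integers of `F`. -/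
lemma isInvariant_ringOfIntegers (F L : Type*) [Field F] [Field L] [Algebra F L] [IsGalois F L] :
    Algebra.IsInvariant (𝓞 F) (𝓞 L) (L ≃ₐ[F] L) := by
  refine ⟨fun b hb ↦ ?_⟩
  have hfix : ∀ g : L ≃ₐ[F] L, g (b : L) = b := fun g ↦ congrArg (algebraMap (𝓞 L) L) (hb g)
  obtain ⟨a, ha⟩ := IntermediateField.mem_bot.mp ((InfiniteGalois.mem_bot_iff_fixed _).mpr hfix)
  have hinteg : IsIntegral ℤ a := by
    rw [← isIntegral_algebraMap_iff (algebraMap F L).injective, ha]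
    exact b.isIntegral_coe
  refine ⟨⟨a, hinteg⟩, ?_⟩
  apply RingOfIntegers.ext
  exact ha

open scoped Pointwise in
/-- Transitivity of the profinite group `Gal(L/F)` on the primes of `L` over a prime of `F` lets
trivial decomposition groups descend from `L / K` to `F / K`. -/
lemma stabilizer_under_trivial {K L : Type*} [Field K] [Field L] [Algebra K L] [IsGalois K L]
    (F : IntermediateField K L) [IsGalois K F] (Q : Ideal (𝓞 L)) [Q.IsPrime]
    (hQ : ∀ σ : L ≃ₐ[K] L, σ • Q = Q → σ = 1) (τ : F ≃ₐ[K] F)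
    (hτ : τ • Q.under (𝓞 F) = Q.under (𝓞 F)) : τ = 1 := by
  let σ : L ≃ₐ[K] L := τ.liftNormal L
  have hστ : ∀ x : F, σ x = τ x := fun x ↦ τ.liftNormal_commutes L x
  have hσ : ∀ x : 𝓞 F, σ • algebraMap (𝓞 F) (𝓞 L) x = algebraMap (𝓞 F) (𝓞 L) (τ • x) := by
    intro x
    apply RingOfIntegers.ext
    exact hστ x
  have hunder : (σ • Q).under (𝓞 F) = Q.under (𝓞 F) := by
    ext x
    rw [← hτ, Ideal.mem_pointwise_smul_iff_inv_smul_mem, Ideal.under_def, Ideal.under_def,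
      Ideal.mem_comap, Ideal.mem_comap, Ideal.mem_pointwise_smul_iff_inv_smul_mem]
    have : σ⁻¹ • algebraMap (𝓞 F) (𝓞 L) x = algebraMap (𝓞 F) (𝓞 L) (τ⁻¹ • x) := by
      rw [inv_smul_eq_iff, hσ, smul_inv_smul]
    rw [this]
  let _ : TopologicalSpace (𝓞 L) := ⊥
  have : DiscreteTopology (𝓞 L) := ⟨rfl⟩
  have : ContinuousSMul (L ≃ₐ[F] L) (𝓞 L) := by
    rw [continuousSMul_iff_stabilizer_isOpen]
    intro b
    have : MulAction.stabilizer (L ≃ₐ[F] L) b = MulAction.stabilizer (L ≃ₐ[F] L) (b : L) := by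
      ext g
      exact RingOfIntegers.ext_iff
    rw [this]
    exact stabilizer_isOpen_of_isIntegral (K := F) (b : L)
  have : SMulCommClass (L ≃ₐ[F] L) (𝓞 F) (𝓞 L) := by
    refine ⟨fun g a b ↦ ?_⟩
    apply RingOfIntegers.ext
    exact map_smul g (a : F) (b : L)
  have := isInvariant_ringOfIntegers F L
  obtain ⟨ρ, hρ⟩ := Algebra.IsInvariant.exists_smul_of_under_eq_of_profinite
    (A := 𝓞 F) (G := L ≃ₐ[F] L) (σ • Q) Q hunder
  have h1 : (ρ.restrictScalars K * σ) • Q = Q := by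
    rw [mul_smul]
    exact hρ.symm
  have h2 := hQ _ h1
  ext x
  have h3 : ρ (σ x) = x := DFunLike.congr_fun h2 (x : L)
  rw [hστ] at h3
  exact (ρ.commutes (τ x)).symm.trans h3

/-! ### Completely split primes -/

open scoped Pointwise in
/-- A prime with trivial decomposition group lies over a completely split prime. -/
lemma totally_split_of_stabilizer_trivial {K F : Type*} [Field K] [NumberField K] [Field F]
    [NumberField F] [Algebra K F] [IsGalois K F] (q : Ideal (𝓞 F)) [q.IsPrime]
    (hq : ∀ τ : F ≃ₐ[K] F, τ • q = q → τ = 1) :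
    ((q.under (𝓞 K)).primesOver (𝓞 F)).ncard = Module.finrank K F ∧
      ∀ w ∈ (q.under (𝓞 K)).primesOver (𝓞 F),
        Ideal.absNorm w = Ideal.absNorm (q.under (𝓞 K)) := by
  have hstab : MulAction.stabilizer (F ≃ₐ[K] F) q = ⊥ :=
    (Subgroup.eq_bot_iff_forall _).mpr fun τ hτ ↦ hq τ hτ
  have hcard : ((q.under (𝓞 K)).primesOver (𝓞 F)).ncard = Nat.card (F ≃ₐ[K] F) := by
    rw [← Algebra.IsInvariant.orbit_eq_primesOver (𝓞 K) (𝓞 F) (F ≃ₐ[K] F) (q.under (𝓞 K)) q,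
      ← MulAction.index_stabilizer, hstab, Subgroup.index_bot]
  have hfund := Ideal.ncard_primesOver_mul_ramificationIdxIn_mul_inertiaDegIn
    (q.under (𝓞 K)) (𝓞 F) (F ≃ₐ[K] F)
  rw [hcard] at hfund
  have hdeg : (q.under (𝓞 K)).inertiaDegIn (𝓞 F) = 1 :=
    Nat.dvd_one.mp (Dvd.intro_left _ ((Nat.mul_eq_left Nat.card_pos.ne').mp hfund))
  refine ⟨by rw [hcard, IsGalois.card_aut_eq_finrank], fun w hw ↦ ?_⟩
  have := hw.1
  have := hw.2
  rw [← Ideal.absNorm_pow_inertiaDeg (q.under (𝓞 K)) w,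
    ← Ideal.inertiaDegIn_eq_inertiaDeg (q.under (𝓞 K)) w (F ≃ₐ[K] F), hdeg, pow_one]

/-- If `M / ℚ` is Galois and has a prime of norm `p`, then all its primes over `p` have norm `p`,
and so do all primes over `p` of a subfield `K`. -/
lemma absNorm_under_eq {K M : Type*} [Field K] [NumberField K] [Field M] [NumberField M]
    [Algebra K M] [IsGalois ℚ M] {p : ℕ} (hp : p.Prime) {P : Ideal (𝓞 M)}
    (hP : Ideal.absNorm P = p) (v : Ideal (𝓞 K)) [v.IsPrime] (hv : (p : 𝓞 K) ∈ v) :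
    Ideal.absNorm v = p := by
  have := isPrime_span_natCast hp
  have hnorm : Ideal.absNorm (Ideal.span {(p : ℤ)}) = p := by simp
  obtain ⟨⟨P', hP', hP'v⟩⟩ := (inferInstance : Nonempty (v.primesOver (𝓞 M)))
  have hpP' : (p : 𝓞 M) ∈ P' := by
    have h : (p : 𝓞 K) ∈ P'.under (𝓞 K) := by rwa [← hP'v.over]
    simpa [Ideal.under_def] using h
  obtain ⟨_, _⟩ := mem_primesOver_of_absNorm_eq hp hP
  have := liesOver_of_natCast_mem hp P' hpP'
  have h1 := Ideal.absNorm_pow_inertiaDeg (Ideal.span {(p : ℤ)}) P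
  have h2 := Ideal.absNorm_pow_inertiaDeg (Ideal.span {(p : ℤ)}) P'
  rw [Ideal.inertiaDeg_eq_of_isGaloisGroup (Ideal.span {(p : ℤ)}) P' P (M ≃ₐ[ℚ] M), h1, hP] at h2
  have h3 := Ideal.absNorm_pow_inertiaDeg v P'
  rw [← h2] at h3
  exact (hp.pow_eq_iff.mp h3).1

open scoped Pointwise in
/-- If `M` has a prime of norm `p`, all primes of `K` over `p` have norm `p`, and the completely split
one below `q` gives `[F : K]` primes of norm `p` in `F`. -/
lemma idealCount_le_of_stabilizer_trivial {K F M : Type*} [Field K] [NumberField K] [Field F]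
    [NumberField F] [Algebra K F] [IsGalois K F] [Field M] [NumberField M]
    [Algebra K M] [IsGalois ℚ M] {p : ℕ} (hp : p.Prime) (q : Ideal (𝓞 F)) [q.IsPrime]
    (hpq : (p : 𝓞 F) ∈ q) (hq : ∀ τ : F ≃ₐ[K] F, τ • q = q → τ = 1) :
    Module.finrank K F * idealCount M p ≤ Module.finrank ℚ M * idealCount F p := by
  rcases Nat.eq_zero_or_pos (idealCount M p) with h0 | hpos
  · simp [h0]
  obtain ⟨⟨P, hP⟩⟩ := (Nat.card_pos_iff.mp hpos).1
  have hv : (p : 𝓞 K) ∈ q.under (𝓞 K) := by simpa [Ideal.under_def] using hpq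
  obtain ⟨hcard, hnorm⟩ := totally_split_of_stabilizer_trivial q hq
  rw [absNorm_under_eq hp hP _ hv] at hnorm
  rw [← hcard, mul_comm]
  refine Nat.mul_le_mul (idealCount_prime_le M hp) ?_
  exact Set.ncard_le_ncard (t := {I : Ideal (𝓞 F) | Ideal.absNorm I = p}) hnorm
    (Ideal.finite_setOfPred_absNorm_eq p)

end

/-! ### Existence of a prime with unbounded local degrees -/

/-- A nontrivial Galois extension `L` of a number field `K` whose Galois
group is torsion free has unbounded local degrees at some rational prime. -/
theorem torsion_free_galois_group_unbounded_local_degrees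
    (K : Type) [Field K] [NumberField K]
    (L : IntermediateField K (AlgebraicClosure K)) (hL : L ≠ ⊥)
    (hGal : IsGalois K L)
    (htf : ∀ σ : L ≃ₐ[K] L, IsOfFinOrder σ → σ = 1) :
    ∃ (p : ℕ) (hp : p.Prime), ¬ HasBoundedLocalDegreesAt p hp L := by
  by_contra! hbdd
  have hinf : ¬ FiniteDimensional K L := by
    intro hfin
    have hsub : Subsingleton (L ≃ₐ[K] L) :=
      ⟨fun σ τ ↦ (htf σ (isOfFinOrder_of_finite σ)).trans (htf τ (isOfFinOrder_of_finite τ)).symm⟩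
    apply hL
    rw [← IntermediateField.finrank_eq_one_iff, ← IsGalois.card_aut_eq_finrank K L]
    exact Nat.card_unique
  let M := IntermediateField.normalClosure ℚ K (AlgebraicClosure K)
  have : Algebra.IsAlgebraic ℚ (AlgebraicClosure K) := Algebra.IsAlgebraic.trans ℚ K _
  have : IsAlgClosure ℚ (AlgebraicClosure K) := ⟨inferInstance, inferInstance⟩
  have : Normal ℚ (AlgebraicClosure K) := IsAlgClosure.normal ℚ _
  have : Normal ℚ M := normalClosure.normal ℚ K (AlgebraicClosure K)
  have : IsGalois ℚ M := ⟨⟩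
  have : NumberField M := ⟨⟩
  have : Algebra.IsAlgebraic ℚ L := Algebra.IsAlgebraic.trans ℚ K L
  -- a finite Galois subextension of degree larger than `[M : ℚ]`
  obtain ⟨s, hs, hli⟩ := exists_finset_linearIndependent_of_le_rank (R := K) (M := L)
    (n := Module.finrank ℚ M + 1) (by
      refine (Cardinal.natCast_lt_aleph0).le.trans (not_lt.mp fun h ↦ hinf ?_)
      exact Module.rank_lt_aleph0_iff.mp h)
  let F := FiniteGaloisIntermediateField.adjoin K (s : Set L)
  have hsF := FiniteGaloisIntermediateField.subset_adjoin K (s : Set L)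
  have hdeg : Module.finrank ℚ M + 1 ≤ Module.finrank K F := by
    have hli' : LinearIndependent K
        (fun x : s ↦ (⟨x, hsF x.2⟩ : F.toIntermediateField)) :=
      LinearIndependent.of_comp F.toIntermediateField.val.toLinearMap hli
    simpa [hs] using hli'.fintype_card_le_finrank
  have : NumberField F := NumberField.of_module_finite K F
  have hle := le_of_idealCount_le M F (Module.finrank K F) (Module.finrank ℚ M) fun p hp ↦ by
    obtain ⟨Q, hQ, hpQ, hstab⟩ := exists_prime_stabilizer_trivial hp htf (hbdd p hp)
    refine idealCount_le_of_stabilizer_trivial hp (Q.under (NumberField.RingOfIntegers F)) ?_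
      (stabilizer_under_trivial F.toIntermediateField Q hstab)
    simpa [Ideal.under_def] using hpQ
  omega
end
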